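/- arXiv:2111.11694 — 2 statements merged into one kernel-verified Lean document; each statement's English description precedes it below -/
import Mathlib

section
/- Let m ≥ 1 and g : [0,1]^m → ℝ. (1) If g has finite Hardy–Krause variation anchored at 0, is coordinate-wise right-continuous on [0,1]^m, and is coordinate-wise left-continuous at every point x ∈ [0,1]^m with some coordinate equal to 1, in each coordinate j with x_j = 1, then there exists a unique finite signed Borel measure ν concentrated on [0,1)^m such that g(x) = ν([0,x] ∩ [0,1)^m) for every x ∈ [0,1]^m. (2) Conversely, if g(x) = ν([0,x] ∩ [0,1)^m) for every x ∈ [0,1]^m for some finite signed Borel measure ν concentrated on [0,1)^m, then g has finite Hardy–Krause variation anchored at 0 and |ν|([0,1)^m \ {0}) = V_HK0(g), where |ν| is the total variation measure and 0 the all-zeros point. -/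
open Finset MeasureTheory
open scoped ENNReal

/-- The quasi-volume `Δ(g; [u,v])` of `g` on the axis-aligned rectangle `[u,v]`. -/
noncomputable def qvol {ι : Type*} [Fintype ι] [DecidableEq ι]
    (g : (ι → ℝ) → ℝ) (u v : ι → ℝ) : ℝ :=
  ∑ δ : ι → Bool,
    (-1 : ℝ) ^ (Finset.univ.filter fun k => δ k = true).card *
      g fun k => if δ k then u k else v k

/-- The Vitali variation of `g : [0,1]^ι → ℝ`: the supremum over all axis-aligned grid
splits of `[0,1]^ι` of the sum of the absolute quasi-volumes of the cells. -/
noncomputable def vitali {ι : Type*} [Fintype ι] [DecidableEq ι]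
    (g : (ι → ℝ) → ℝ) : ℝ≥0∞ :=
  ⨆ (N : ι → ℕ) (u : ∀ k, Fin (N k + 1) → ℝ) (_ : ∀ k, StrictMono (u k))
      (_ : ∀ k, u k 0 = 0) (_ : ∀ k, u k (Fin.last (N k)) = 1),
    ∑ l : ∀ k, Fin (N k),
      ENNReal.ofReal
        |qvol g (fun k => u k ((l k).castSucc)) fun k => u k ((l k).succ)|

/-- The Hardy–Krause variation of `g` anchored at `0`: the sum over nonempty `T ⊆ ι`
of the Vitali variations of the faces of `g` (coordinates outside `T` set to `0`). -/
noncomputable def hk0 {ι : Type*} [Fintype ι] [DecidableEq ι]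
    (g : (ι → ℝ) → ℝ) : ℝ≥0∞ :=
  ∑ T : Finset ι,
    if T.Nonempty then
      vitali fun t : {j // j ∈ T} → ℝ =>
        g fun k => if h : k ∈ T then t ⟨k, h⟩ else 0
    else 0

/-!
On a finite grid, Möbius inversion writes `g` as the distribution function of an atomic signed
measure. The atoms away from the origin are exactly the quasi-volumes of the grid cells of the
faces of `g`, so the total mass of the atoms is at most `|g 0| + V_HK0 g`, whatever the grid. Along
finer and finer grids the positive and the negative atoms therefore have weak limits `μ₁` and `μ₂`,
and `g` is the distribution function of `μ₁ - μ₂` off the countably many hyperplanes that `μ₁` or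
`μ₂` charges; one-sided continuity removes the exception. Boxes `[0, x]` form a π-system, which
gives uniqueness.

If `g` is the distribution function of `ν`, its quasi-volumes are `ν`-masses of disjoint half-open
cells, hence `V_HK0 g ≤ |ν| {0}ᶜ`. Conversely `ν` is the measure constructed from `g`, so
`|ν| {0} + |ν| {0}ᶜ ≤ |g 0| + V_HK0 g`, where `|g 0| = |ν {0}| ≤ |ν| {0}`.
-/

section QuasiVolume

variable {ι : Type*} [Fintype ι] [DecidableEq ι]

lemma qvol_prod (f : ι → ℝ → ℝ) (u v : ι → ℝ) :
    qvol (fun x => ∏ k, f k (x k)) u v = ∏ k, (f k (v k) - f k (u k)) := by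
  have sum_bool (k : ι) :
      f k (v k) - f k (u k) = ∑ b : Bool, if b then -f k (u k) else f k (v k) := by
    simp only [Fintype.sum_bool, if_true, Bool.false_eq_true, if_false]
    ring
  simp_rw [sum_bool, Finset.prod_univ_sum, Fintype.piFinset_univ, qvol]
  refine Finset.sum_congr rfl fun δ _ => ?_
  have sign_mul (k : ι) : (if δ k = true then -f k (u k) else f k (v k)) =
      (if δ k = true then (-1 : ℝ) else 1) * f k (if δ k then u k else v k) := by
    split_ifs <;> simp
  simp_rw [sign_mul, Finset.prod_mul_distrib, Finset.prod_ite, Finset.prod_const, one_pow,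
    mul_one]

lemma qvol_congr {g g' : (ι → ℝ) → ℝ} {u v : ι → ℝ}
    (h : ∀ x : ι → ℝ, (∀ k, x k = u k ∨ x k = v k) → g x = g' x) :
    qvol g u v = qvol g' u v :=
  Finset.sum_congr rfl fun δ _ => by rw [h]; exact fun k => by by_cases hk : δ k <;> simp [hk]

lemma qvol_sub (g g' : (ι → ℝ) → ℝ) (u v : ι → ℝ) :
    qvol (fun x => g x - g' x) u v = qvol g u v - qvol g' u v := by
  simp_rw [qvol, mul_sub, Finset.sum_sub_distrib]

lemma qvol_integral {Ω : Type*} [MeasurableSpace Ω] {μ : Measure Ω} {F : Ω → (ι → ℝ) → ℝ}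
    (hF : ∀ x, Integrable (fun ω => F ω x) μ) (u v : ι → ℝ) :
    qvol (fun x => ∫ ω, F ω x ∂μ) u v = ∫ ω, qvol (F ω) u v ∂μ := by
  simp_rw [qvol]
  rw [integral_finsetSum _ fun δ _ => (hF _).const_mul _]
  simp_rw [integral_const_mul]

end QuasiVolume

section Faces

variable {ι : Type*}

/-- The half-open cell `∏_{k ∈ T} (a k, b k]` of the face of `ℝ^ι` spanned by `T`. -/
def faceCell (T : Finset ι) (a b : {j // j ∈ T} → ℝ) : Set (ι → ℝ) :=
  {s | (∀ k : {j // j ∈ T}, s k ∈ Set.Ioc (a k) (b k)) ∧ ∀ k ∉ T, s k = 0}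

lemma measurableSet_faceCell [Countable ι] (T : Finset ι) (a b : {j // j ∈ T} → ℝ) :
    MeasurableSet (faceCell T a b) := by
  simp only [faceCell, Set.ofPred_and, Set.ofPred_forall]
  measurability

/-- The difference of the distribution functions of two measures on the positive orthant, that is,
the distribution function of the signed measure `μ₁ - μ₂`. -/
noncomputable def signedCDF (μ₁ μ₂ : Measure (ι → ℝ)) (x : ι → ℝ) : ℝ :=
  μ₁.real (Set.Icc 0 x) - μ₂.real (Set.Icc 0 x)

variable [DecidableEq ι]

/-- The embedding `ℝ^T → ℝ^ι` onto the face where the coordinates outside `T` vanish. -/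
def faceEmb (T : Finset ι) (t : {j // j ∈ T} → ℝ) : ι → ℝ :=
  fun k => if h : k ∈ T then t ⟨k, h⟩ else 0

lemma mem_Icc_faceEmb_iff {T : Finset ι} {t : {j // j ∈ T} → ℝ} {s : ι → ℝ} :
    s ∈ Set.Icc 0 (faceEmb T t) ↔
      (∀ k : {j // j ∈ T}, s k ∈ Set.Icc 0 (t k)) ∧ ∀ k ∉ T, s k = 0 := by
  simp only [Set.mem_Icc, Pi.le_def, Pi.zero_apply, faceEmb, ← forall_and, Subtype.forall]
  refine forall_congr' fun k => ?_
  by_cases hk : k ∈ T <;> simp [hk, and_comm, le_antisymm_iff]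

lemma indicator_Icc_faceEmb {T : Finset ι} {s : ι → ℝ} (hs : ∀ k ∉ T, s k = 0)
    (t : {j // j ∈ T} → ℝ) :
    (Set.Icc 0 (faceEmb T t)).indicator (1 : (ι → ℝ) → ℝ) s =
      ∏ k, (Set.Icc 0 (t k)).indicator (1 : ℝ → ℝ) (s k) := by
  classical
  simp [Set.indicator_apply, mem_Icc_faceEmb_iff, and_iff_left hs, Finset.prod_ite_zero,
    -Subtype.forall, -Set.mem_Icc]

lemma qvol_indicator_Icc_faceEmb {T : Finset ι} {a b : {j // j ∈ T} → ℝ}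
    (ha : 0 ≤ a) (hab : a ≤ b) (s : ι → ℝ) :
    qvol (fun t => (Set.Icc 0 (faceEmb T t)).indicator (1 : (ι → ℝ) → ℝ) s) a b =
      (faceCell T a b).indicator 1 s := by
  classical
  by_cases hs : ∀ k ∉ T, s k = 0
  · have sub_eq (k : {j // j ∈ T}) :
        (Set.Icc 0 (b k)).indicator (1 : ℝ → ℝ) (s k) - (Set.Icc 0 (a k)).indicator 1 (s k) =
          (Set.Ioc (a k) (b k)).indicator 1 (s k) := by
      have := ha k
      have := hab k
      simp only [Set.indicator_apply, Set.mem_Icc, Set.mem_Ioc, Pi.one_apply, Pi.zero_apply] at *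
      grind
    simp_rw [indicator_Icc_faceEmb hs,
      qvol_prod (fun (k : {j // j ∈ T}) r => (Set.Icc 0 r).indicator 1 (s k)), sub_eq]
    simp [Set.indicator_apply, faceCell, and_iff_left hs, Finset.prod_ite_zero, -Subtype.forall]
  · simp [qvol, mem_Icc_faceEmb_iff, faceCell, hs, -Set.mem_Icc]

lemma qvol_measureReal [Countable ι] (μ : Measure (ι → ℝ)) [IsFiniteMeasure μ] {T : Finset ι}
    {a b : {j // j ∈ T} → ℝ} (ha : 0 ≤ a) (hab : a ≤ b) :
    qvol (fun t => μ.real (Set.Icc 0 (faceEmb T t))) a b = μ.real (faceCell T a b) := by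
  simp_rw [← integral_indicator_one (measurableSet_faceCell T a b),
    ← integral_indicator_one measurableSet_Icc, ← qvol_indicator_Icc_faceEmb ha hab]
  exact qvol_integral (fun x => (integrable_const 1).indicator measurableSet_Icc) a b

lemma qvol_face_of_eqOn_signedCDF [Countable ι] {g : (ι → ℝ) → ℝ} {μ₁ μ₂ : Measure (ι → ℝ)}
    [IsFiniteMeasure μ₁] [IsFiniteMeasure μ₂] {A : Set ℝ} (hA : 0 ∈ A)
    (hg : Set.EqOn g (signedCDF μ₁ μ₂) (Set.univ.pi fun _ => A)) {T : Finset ι}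
    {a b : {j // j ∈ T} → ℝ} (ha : 0 ≤ a) (hab : a ≤ b) (haA : ∀ k, a k ∈ A)
    (hbA : ∀ k, b k ∈ A) :
    qvol (fun t => g (faceEmb T t)) a b =
      μ₁.real (faceCell T a b) - μ₂.real (faceCell T a b) := by
  rw [← qvol_measureReal μ₁ ha hab, ← qvol_measureReal μ₂ ha hab, ← qvol_sub]
  refine qvol_congr fun x hx => hg fun k _ => ?_
  by_cases hk : k ∈ T
  · rcases hx ⟨k, hk⟩ with h | h <;> simp [faceEmb, hk, h, haA, hbA]
  · simpa [faceEmb, hk] using hA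

end Faces

section VariationBound

lemma ofReal_abs_measureReal_sub_le {Ω : Type*} [MeasurableSpace Ω] (μ₁ μ₂ : Measure Ω)
    [IsFiniteMeasure μ₁] [IsFiniteMeasure μ₂] (S : Set Ω) :
    ENNReal.ofReal |μ₁.real S - μ₂.real S| ≤ (μ₁ + μ₂) S := by
  have abs_sub_le : |μ₁.real S - μ₂.real S| ≤ μ₁.real S + μ₂.real S := by
    simpa only [abs_of_nonneg measureReal_nonneg] using abs_sub (μ₁.real S) (μ₂.real S)
  refine (ENNReal.ofReal_le_ofReal abs_sub_le).trans_eq ?_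
  rw [ENNReal.ofReal_add measureReal_nonneg measureReal_nonneg, ofReal_measureReal,
    ofReal_measureReal, Measure.add_apply]

lemma eq_of_mem_Ioc_of_mem_Ioc {α : Type*} [LinearOrder α] {N : ℕ} {u : Fin (N + 1) → α}
    (hu : Monotone u) {i j : Fin N} {r : α} (hi : r ∈ Set.Ioc (u i.castSucc) (u i.succ))
    (hj : r ∈ Set.Ioc (u j.castSucc) (u j.succ)) : i = j := by
  have le_of_mem {i j : Fin N} (hi : u i.castSucc < r) (hj : r ≤ u j.succ) : i ≤ j :=
    not_lt.1 fun hji => (hj.trans (hu (Fin.succ_le_castSucc_iff.2 hji))).not_gt hi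
  exact le_antisymm (le_of_mem hi.1 hj.2) (le_of_mem hj.1 hi.2)

variable {ι : Type*} [DecidableEq ι]

lemma sum_measure_faceCell_le [Countable ι] (μ : Measure (ι → ℝ)) {T : Finset ι}
    {N : {j // j ∈ T} → ℕ} {u : ∀ k, Fin (N k + 1) → ℝ} (hu : ∀ k, Monotone (u k))
    (u_zero : ∀ k, u k 0 = 0) :
    ∑ l : ∀ k, Fin (N k), μ (faceCell T (fun k => u k (l k).castSucc) fun k => u k (l k).succ) ≤
      μ {s | ∀ k, s k ≠ 0 ↔ k ∈ T} := by
  rw [← tsum_fintype (L := .unconditional _), ← measure_iUnion]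
  · refine measure_mono (Set.iUnion_subset fun l s hs k => ?_)
    by_cases hk : k ∈ T
    · have nonneg : 0 ≤ u ⟨k, hk⟩ (l ⟨k, hk⟩).castSucc := u_zero ⟨k, hk⟩ ▸ hu _ (Fin.zero_le _)
      simpa only [hk, iff_true] using (nonneg.trans_lt (hs.1 ⟨k, hk⟩).1).ne'
    · simpa only [hk, iff_false, not_not] using hs.2 k hk
  · refine fun l l' hne => Set.disjoint_left.2 fun s hs hs' => hne (funext fun k => ?_)
    exact eq_of_mem_Ioc_of_mem_Ioc (hu k) (hs.1 k) (hs'.1 k)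
  · exact fun l => measurableSet_faceCell _ _ _

variable {g : (ι → ℝ) → ℝ} {μ₁ μ₂ : Measure (ι → ℝ)} [IsFiniteMeasure μ₁] [IsFiniteMeasure μ₂]

lemma vitali_face_le [Countable ι]
    (hg : Set.EqOn g (signedCDF μ₁ μ₂) (Set.univ.pi fun _ => Set.Icc 0 1)) (T : Finset ι) :
    vitali (fun t => g (faceEmb T t)) ≤ (μ₁ + μ₂) {s | ∀ k, s k ≠ 0 ↔ k ∈ T} := by
  simp only [vitali, iSup_le_iff]
  intro N u hu u_zero u_last
  have u_mem (k i) : u k i ∈ Set.Icc (0 : ℝ) 1 :=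
    ⟨u_zero k ▸ (hu k).monotone (Fin.zero_le i), u_last k ▸ (hu k).monotone (Fin.le_last i)⟩
  refine (Finset.sum_le_sum fun l _ => ?_).trans
    (sum_measure_faceCell_le (μ₁ + μ₂) (fun k => (hu k).monotone) u_zero)
  rw [qvol_face_of_eqOn_signedCDF (by simp) hg (fun k => (u_mem _ _).1)
    (fun k => (hu k).monotone (Fin.castSucc_le_succ _)) (fun k => u_mem _ _) (fun k => u_mem _ _)]
  exact ofReal_abs_measureReal_sub_le μ₁ μ₂ _

lemma hk0_le [Fintype ι] (hg : Set.EqOn g (signedCDF μ₁ μ₂) (Set.univ.pi fun _ => Set.Icc 0 1)) :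
    hk0 g ≤ (μ₁ + μ₂) {0}ᶜ := by
  have preimage_eq (T : Finset ι) : (fun s : ι → ℝ => ({k | s k ≠ 0} : Finset ι)) ⁻¹' {T} =
      {s | ∀ k, s k ≠ 0 ↔ k ∈ T} := by
    ext s
    simp [Finset.ext_iff]
  have measurableSet_preimage (T : Finset ι) :
      MeasurableSet ((fun s : ι → ℝ => ({k | s k ≠ 0} : Finset ι)) ⁻¹' {T}) := by
    simp only [preimage_eq, Set.ofPred_forall]
    measurability
  calc hk0 g = ∑ T : Finset ι with T.Nonempty, vitali (fun t => g (faceEmb T t)) :=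
        (Finset.sum_filter _ _).symm
    _ ≤ ∑ T : Finset ι with T.Nonempty,
          (μ₁ + μ₂) ((fun s : ι → ℝ => ({k | s k ≠ 0} : Finset ι)) ⁻¹' {T}) :=
        Finset.sum_le_sum fun T _ => (preimage_eq T).symm ▸ vitali_face_le hg T
    _ = (μ₁ + μ₂) {0}ᶜ := by
        rw [sum_measure_preimage_singleton _ fun T _ => measurableSet_preimage T]
        congr 1
        ext s
        simp [Finset.filter_nonempty_iff, funext_iff]

end VariationBound

section Grid

lemma exists_eq_sum_of_le {P : Type*} [Fintype P] [PartialOrder P] [DecidableLE P] (f : P → ℝ) :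
    ∃ w : P → ℝ, ∀ y, f y = ∑ a with a ≤ y, w a := by
  classical
  let w : P → ℝ := wellFounded_lt.fix fun y v => f y - ∑ a : {a // a < y}, v a a.2
  have w_eq (y : P) : w y = f y - ∑ a : {a // a < y}, w a := WellFounded.fix_eq _ _ y
  refine ⟨w, fun y => ?_⟩
  have filter_le : Finset.univ.filter (· ≤ y) = insert y (Finset.univ.filter (· < y)) := by
    ext a
    simp [le_iff_eq_or_lt]
  rw [filter_le, Finset.sum_insert (by simp), w_eq,
    Finset.sum_subtype (p := fun a => a < y) _ (by simp), sub_add_cancel]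

lemma exists_grid (D : Finset (Set.Icc (0 : ℝ) 1)) :
    ∃ (N : ℕ) (u : Fin (N + 1) → ℝ), StrictMono u ∧ u 0 = 0 ∧ u (Fin.last N) = 1 ∧
      (↑) '' (D : Set (Set.Icc (0 : ℝ) 1)) ⊆ Set.range u := by
  classical
  set S : Finset (Set.Icc (0 : ℝ) 1) := insert ⊥ (insert ⊤ D)
  obtain ⟨N, hN⟩ : ∃ N, S.card = N + 1 :=
    Nat.exists_eq_succ_of_ne_zero (Finset.card_ne_zero_of_mem (Finset.mem_insert_self ⊥ _))
  set e := S.orderEmbOfFin hN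
  have range_e : Set.range e = S := S.range_orderEmbOfFin hN
  have e_zero : e 0 = ⊥ := by
    obtain ⟨i, hi⟩ : ⊥ ∈ Set.range e := by simp [range_e, S]
    exact le_bot_iff.1 (hi ▸ e.monotone (Fin.zero_le i))
  have e_last : e (Fin.last N) = ⊤ := by
    obtain ⟨i, hi⟩ : ⊤ ∈ Set.range e := by simp [range_e, S]
    exact top_le_iff.1 (hi ▸ e.monotone (Fin.le_last i))
  refine ⟨N, fun i => e i, fun i j hij => e.strictMono hij, congrArg Subtype.val e_zero,
    congrArg Subtype.val e_last, ?_⟩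
  rw [Set.range_comp' Subtype.val e, range_e]
  exact Set.image_mono fun d hd => by simp [S, Finset.mem_coe.1 hd]

/-- The atomic measure with mass `w a` at the point `p a`, negative weights being discarded. -/
noncomputable def atomicMeasure {κ E : Type*} [Fintype κ] [MeasurableSpace E] (w : κ → ℝ)
    (p : κ → E) : Measure E :=
  ∑ a, ENNReal.ofReal (w a) • Measure.dirac (p a)

section AtomicMeasure

variable {κ E : Type*} [Fintype κ] [MeasurableSpace E]

instance (w : κ → ℝ) (p : κ → E) : IsFiniteMeasure (atomicMeasure w p) := by
  constructor
  simp [atomicMeasure, ENNReal.sum_lt_top]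

lemma atomicMeasure_compl_eq_zero {w : κ → ℝ} {p : κ → E} {S : Set E} (hS : MeasurableSet S)
    (hp : ∀ a, p a ∈ S) : atomicMeasure w p Sᶜ = 0 := by
  simp [atomicMeasure, hS.compl, hp]

lemma atomicMeasure_real_sub_real_neg (w : κ → ℝ) (p : κ → E) {S : Set E} [DecidablePred (· ∈ S)]
    (hS : MeasurableSet S) :
    (atomicMeasure w p).real S - (atomicMeasure (-w) p).real S = ∑ a with p a ∈ S, w a := by
  have real_eq (v : κ → ℝ) : (atomicMeasure v p).real S = ∑ a with p a ∈ S, max (v a) 0 := by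
    have apply_eq : atomicMeasure v p S = ∑ a with p a ∈ S, ENNReal.ofReal (v a) := by
      simp [atomicMeasure, hS, Set.indicator_apply, Finset.sum_filter]
    rw [Measure.real, apply_eq, ENNReal.toReal_sum fun a _ => ENNReal.ofReal_ne_top]
    simp_rw [ENNReal.toReal_ofReal']
  simp_rw [real_eq, ← Finset.sum_sub_distrib, Pi.neg_apply, max_zero_sub_max_neg_zero_eq_self]

lemma atomicMeasure_add_atomicMeasure_neg_univ (w : κ → ℝ) (p : κ → E) :
    (atomicMeasure w p + atomicMeasure (-w) p) Set.univ = ∑ a, ENNReal.ofReal |w a| := by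
  simp only [atomicMeasure, Measure.coe_add, Measure.coe_finsetSum, Finset.sum_apply, Pi.add_apply,
    Measure.smul_apply, measure_univ, smul_eq_mul, mul_one, ← Finset.sum_add_distrib, Pi.neg_apply]
  refine Finset.sum_congr rfl fun a _ => ?_
  rcases le_total 0 (w a) with h | h
  · rw [abs_of_nonneg h, ENNReal.ofReal_of_nonpos (neg_nonpos.2 h), add_zero]
  · rw [abs_of_nonpos h, ENNReal.ofReal_of_nonpos h, zero_add]

end AtomicMeasure

variable {ι : Type*} [DecidableEq ι] {N : ℕ}

/-- The upper corner of the cell with index `l` in the face spanned by `T` of a grid, as an index of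
a grid point; every grid point is the upper corner of exactly one cell of one face. -/
def facePt (T : Finset ι) (l : {j // j ∈ T} → Fin N) : ι → Fin (N + 1) :=
  fun k => if h : k ∈ T then (l ⟨k, h⟩).succ else 0

lemma surjective_facePt [Finite ι] :
    Function.Surjective fun q : Σ T : Finset ι, {j // j ∈ T} → Fin N => facePt q.1 q.2 := by
  cases nonempty_fintype ι
  intro a
  refine ⟨⟨Finset.univ.filter (a · ≠ 0),
    fun k => (a k).pred (Finset.mem_filter.1 k.2).2⟩, funext fun k => ?_⟩
  by_cases hk : a k = 0 <;> simp [facePt, hk]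

variable {u : Fin (N + 1) → ℝ}

lemma comp_mem_faceCell_iff (hu : StrictMono u) (u_zero : u 0 = 0) {T : Finset ι}
    {l : {j // j ∈ T} → Fin N} {a : ι → Fin (N + 1)} :
    u ∘ a ∈ faceCell T (fun k => u (l k).castSucc) (fun k => u (l k).succ) ↔ a = facePt T l := by
  have eq_zero_iff (i) : u i = 0 ↔ i = 0 := by rw [← u_zero, hu.injective.eq_iff]
  have mem_Ioc_iff (i : Fin (N + 1)) (j : Fin N) :
      u i ∈ Set.Ioc (u j.castSucc) (u j.succ) ↔ i = j.succ := by
    rw [Set.mem_Ioc, hu.lt_iff_lt, hu.le_iff_le, Fin.castSucc_lt_iff_succ_le, le_antisymm_iff,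
      and_comm]
  simp only [faceCell, Set.mem_ofPred_eq, Function.comp_apply, mem_Ioc_iff, eq_zero_iff,
    funext_iff, Subtype.forall, ← forall_and, facePt]
  refine forall_congr' fun k => ?_
  by_cases hk : k ∈ T <;> simp [hk]

variable [Fintype ι] {g : (ι → ℝ) → ℝ}

lemma exists_weight_eqOn_signedCDF (g : (ι → ℝ) → ℝ) (hu : StrictMono u) (u_zero : u 0 = 0) :
    ∃ w : (ι → Fin (N + 1)) → ℝ,
      Set.EqOn g (signedCDF (atomicMeasure w (u ∘ ·)) (atomicMeasure (-w) (u ∘ ·)))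
        (Set.univ.pi fun _ => Set.range u) := by
  classical
  obtain ⟨w, hw⟩ := exists_eq_sum_of_le fun y : ι → Fin (N + 1) => g (u ∘ y)
  refine ⟨w, fun x hx => ?_⟩
  choose y hy using fun k => hx k (Set.mem_univ k)
  obtain rfl : u ∘ y = x := funext hy
  have mem_Icc_iff (a : ι → Fin (N + 1)) : u ∘ a ∈ Set.Icc 0 (u ∘ y) ↔ a ≤ y := by
    simp [Pi.le_def, ← u_zero, hu.le_iff_le]
  rw [signedCDF, atomicMeasure_real_sub_real_neg w _ measurableSet_Icc, hw y]
  exact Finset.sum_congr (by simp only [mem_Icc_iff]) fun _ _ => rfl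

lemma weight_facePt_eq_qvol (hu : StrictMono u) (u_zero : u 0 = 0) {w : (ι → Fin (N + 1)) → ℝ}
    (hw : Set.EqOn g (signedCDF (atomicMeasure w (u ∘ ·)) (atomicMeasure (-w) (u ∘ ·)))
      (Set.univ.pi fun _ => Set.range u)) (T : Finset ι) (l : {j // j ∈ T} → Fin N) :
    w (facePt T l) = qvol (fun t => g (faceEmb T t)) (fun k => u (l k).castSucc)
      fun k => u (l k).succ := by
  classical
  rw [qvol_face_of_eqOn_signedCDF (A := Set.range u) ⟨0, u_zero⟩ hw
      (fun k => u_zero.ge.trans (hu.monotone (Fin.zero_le _)))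
      (fun k => hu.monotone (Fin.castSucc_le_succ _)) (fun k => ⟨_, rfl⟩) (fun k => ⟨_, rfl⟩),
    atomicMeasure_real_sub_real_neg w _ (measurableSet_faceCell _ _ _)]
  simp [comp_mem_faceCell_iff hu u_zero, Finset.filter_eq']

lemma sum_ofReal_abs_weight_le (hu : StrictMono u) (u_zero : u 0 = 0) (u_last : u (Fin.last N) = 1)
    {w : (ι → Fin (N + 1)) → ℝ}
    (hw : Set.EqOn g (signedCDF (atomicMeasure w (u ∘ ·)) (atomicMeasure (-w) (u ∘ ·)))
      (Set.univ.pi fun _ => Set.range u)) :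
    ∑ a, ENNReal.ofReal |w a| ≤ ENNReal.ofReal |g 0| + hk0 g := by
  have face_le (T : Finset ι) : ∑ l, ENNReal.ofReal |w (facePt T l)| ≤
      (if T = ∅ then ENNReal.ofReal |g 0| else 0) +
        if T.Nonempty then vitali fun t => g (faceEmb T t) else 0 := by
    simp_rw [weight_facePt_eq_qvol hu u_zero hw]
    rcases T.eq_empty_or_nonempty with rfl | hT
    · have faceEmb_empty (t) : faceEmb (∅ : Finset ι) t = 0 := by ext; simp [faceEmb]
      simp [qvol, faceEmb_empty]
    · rw [if_neg hT.ne_empty, if_pos hT, zero_add, vitali]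
      exact le_iSup_of_le (fun _ => N) <| le_iSup_of_le (fun _ => u) <|
        le_iSup₂_of_le (fun _ => hu) (fun _ => u_zero) <| le_iSup_of_le (fun _ => u_last) le_rfl
  calc ∑ a, ENNReal.ofReal |w a|
      ≤ ∑ T : Finset ι, ∑ l, ENNReal.ofReal |w (facePt T l)| := by
        simpa [tsum_fintype, Fintype.sum_sigma] using
          ENNReal.tsum_le_tsum_comp_of_surjective (surjective_facePt (N := N) (ι := ι))
            fun a => ENNReal.ofReal |w a|
    _ ≤ _ := Finset.sum_le_sum fun T _ => face_le T
    _ = ENNReal.ofReal |g 0| + hk0 g := by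
        rw [Finset.sum_add_distrib, Finset.sum_ite_eq' _ _ _, if_pos (Finset.mem_univ _)]
        rfl

lemma exists_finiteMeasures_eqOn_grid (g : (ι → ℝ) → ℝ) (D : Finset (Set.Icc (0 : ℝ) 1)) :
    ∃ μ₁ μ₂ : FiniteMeasure (ι → ℝ), μ₁ (Set.Icc 0 1)ᶜ = 0 ∧ μ₂ (Set.Icc 0 1)ᶜ = 0 ∧
      (μ₁ + μ₂ : Measure (ι → ℝ)) Set.univ ≤ ENNReal.ofReal |g 0| + hk0 g ∧
      Set.EqOn g (signedCDF μ₁ μ₂)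
        (Set.univ.pi fun _ => (↑) '' (D : Set (Set.Icc (0 : ℝ) 1))) := by
  obtain ⟨N, u, hu, u_zero, u_last, hD⟩ := exists_grid D
  obtain ⟨w, hw⟩ := exists_weight_eqOn_signedCDF g hu u_zero
  have comp_mem (a : ι → Fin (N + 1)) : u ∘ a ∈ Set.Icc 0 1 :=
    ⟨fun k => u_zero.ge.trans (hu.monotone (Fin.zero_le _)),
      fun k => (hu.monotone (Fin.le_last _)).trans u_last.le⟩
  have null (v : (ι → Fin (N + 1)) → ℝ) : atomicMeasure v (u ∘ ·) (Set.Icc 0 1)ᶜ = 0 :=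
    atomicMeasure_compl_eq_zero measurableSet_Icc comp_mem
  refine ⟨⟨atomicMeasure w (u ∘ ·), inferInstance⟩, ⟨atomicMeasure (-w) (u ∘ ·), inferInstance⟩,
    (FiniteMeasure.null_iff_toMeasure_null _ _).2 (null w),
    (FiniteMeasure.null_iff_toMeasure_null _ _).2 (null (-w)), ?_,
    hw.mono (Set.pi_mono fun _ _ => hD)⟩
  refine (atomicMeasure_add_atomicMeasure_neg_univ w _).trans_le ?_
  exact sum_ofReal_abs_weight_le hu u_zero u_last hw

end Grid

section WeakLimit

open Filter Topology

lemma eventually_measureReal_lt_of_tendsto {Ω α : Type*} [MeasurableSpace Ω] [TopologicalSpace Ω]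
    [HasOuterApproxClosed Ω] [OpensMeasurableSpace Ω] {L : Filter α} {μ : FiniteMeasure Ω}
    {μs : α → FiniteMeasure Ω} (hμs : Tendsto μs L (𝓝 μ)) {S : Set Ω}
    (hS : (μ : Measure Ω) (frontier S) = 0) {r : ℝ} (hr : (μ : Measure Ω).real S < r) :
    ∀ᶠ i in L, (μs i : Measure Ω).real S < r := by
  have limsup_lt : L.limsup (fun i => (μs i : Measure Ω) (closure S)) < ENNReal.ofReal r := by
    refine (FiniteMeasure.limsup_measure_closed_le_of_tendsto hμs isClosed_closure).trans_lt ?_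
    rwa [measure_closure_of_null_frontier hS,
      ENNReal.lt_ofReal_iff_toReal_lt (measure_ne_top _ _)]
  filter_upwards [eventually_lt_of_limsup_lt limsup_lt] with i hi
  rw [Measure.real, ← ENNReal.lt_ofReal_iff_toReal_lt (measure_ne_top _ _)]
  exact (measure_mono subset_closure).trans_lt hi

lemma tendsto_measureReal_of_null_frontier {Ω α : Type*} [MeasurableSpace Ω] [TopologicalSpace Ω]
    [HasOuterApproxClosed Ω] [OpensMeasurableSpace Ω] {L : Filter α} {μ : FiniteMeasure Ω}
    {μs : α → FiniteMeasure Ω} (hμs : Tendsto μs L (𝓝 μ)) {S : Set Ω} (hSm : MeasurableSet S)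
    (hS : (μ : Measure Ω) (frontier S) = 0) :
    Tendsto (fun i => (μs i : Measure Ω).real S) L (𝓝 ((μ : Measure Ω).real S)) := by
  refine tendsto_order.2 ⟨fun r hr => ?_, fun r hr =>
    eventually_measureReal_lt_of_tendsto hμs hS hr⟩
  have mass_tendsto : Tendsto (fun i => (μs i : Measure Ω).real Set.univ) L
      (𝓝 ((μ : Measure Ω).real Set.univ)) :=
    (NNReal.continuous_coe.tendsto _).comp hμs.mass
  obtain ⟨ε, hε, rfl⟩ : ∃ ε > 0, (μ : Measure Ω).real S - 2 * ε = r :=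
    ⟨((μ : Measure Ω).real S - r) / 2, by linarith, by ring⟩
  filter_upwards [eventually_measureReal_lt_of_tendsto (S := Sᶜ) hμs (by rwa [frontier_compl])
      (lt_add_of_pos_right _ hε),
    mass_tendsto.eventually_const_lt (sub_lt_self _ hε)] with i hcompl hmass
  rw [measureReal_compl hSm, measureReal_compl hSm] at hcompl
  linarith

variable {ι : Type*}

lemma Iic_ae_eq_Icc {μ : Measure (ι → ℝ)} (hμ : μ (Set.Icc 0 1)ᶜ = 0) (x : ι → ℝ) :
    Set.Iic x =ᵐ[μ] Set.Icc 0 x := by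
  filter_upwards [compl_mem_ae_iff.2 hμ] with t ht
  rw [compl_compl] at ht
  exact propext ⟨fun h => ⟨ht.1, h⟩, fun h => h.2⟩

lemma frontier_Iic_subset_iUnion [Finite ι] (x : ι → ℝ) :
    frontier (Set.Iic x) ⊆ ⋃ j, {t | t j = x j} := by
  intro t ht
  rw [isClosed_Iic.frontier_eq, ← Set.pi_univ_Iic, interior_pi_set Set.finite_univ] at ht
  simp_rw [interior_Iic] at ht
  simp only [Set.mem_sdiff, Set.mem_pi, Set.mem_univ, Set.mem_Iic, Set.mem_Iio, true_imp_iff,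
    not_forall, not_lt] at ht
  obtain ⟨hle, j, hj⟩ := ht
  exact Set.mem_iUnion.2 ⟨j, le_antisymm (hle j) hj⟩

lemma tendsto_measureReal_Icc [Finite ι] {α : Type*} {L : Filter α} {μ : FiniteMeasure (ι → ℝ)}
    {μs : α → FiniteMeasure (ι → ℝ)} (hlim : Tendsto μs L (𝓝 μ))
    (hμs : ∀ i, (μs i : Measure (ι → ℝ)) (Set.Icc 0 1)ᶜ = 0)
    (hμ : (μ : Measure (ι → ℝ)) (Set.Icc 0 1)ᶜ = 0) {x : ι → ℝ}
    (hx : ∀ j, (μ : Measure (ι → ℝ)) {t | t j = x j} = 0) :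
    Tendsto (fun i => (μs i : Measure (ι → ℝ)).real (Set.Icc 0 x)) L
      (𝓝 ((μ : Measure (ι → ℝ)).real (Set.Icc 0 x))) := by
  simp_rw [← measureReal_congr (Iic_ae_eq_Icc (hμs _) x), ← measureReal_congr (Iic_ae_eq_Icc hμ x)]
  exact tendsto_measureReal_of_null_frontier hlim measurableSet_Iic
    (measure_mono_null (frontier_Iic_subset_iUnion x) (measure_iUnion_null hx))

lemma countable_measure_hyperplane_pos [Countable ι] (μ : Measure (ι → ℝ)) [IsFiniteMeasure μ] :
    {r | ∃ j, 0 < μ {t | t j = r}}.Countable := by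
  rw [Set.ofPred_exists]
  exact Set.countable_iUnion fun j => Measure.countable_meas_level_set_pos (measurable_pi_apply j)

lemma isCompact_finiteMeasure_prod {E : Type*} [MeasurableSpace E] [TopologicalSpace E] [T2Space E]
    [BorelSpace E] (C : NNReal) {K : Set E} (hK : IsCompact K) :
    IsCompact {p : FiniteMeasure E × FiniteMeasure E |
      p.1.mass + p.2.mass ≤ C ∧ p.1 Kᶜ = 0 ∧ p.2 Kᶜ = 0} := by
  have compact := isCompact_setOfPred_finiteMeasure_le_of_isCompact C hK
  have closed : IsClosed {p : FiniteMeasure E × FiniteMeasure E | p.1.mass + p.2.mass ≤ C} :=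
    isClosed_le (by fun_prop) continuous_const
  convert (compact.prod compact).inter_right closed using 1
  ext p
  exact ⟨fun h => ⟨⟨⟨le_self_add.trans h.1, h.2.1⟩, le_add_self.trans h.1, h.2.2⟩, h.1⟩,
    fun h => ⟨h.2, h.1.1.2, h.1.2.2⟩⟩

/-- A Helly-type selection: along an ultrafilter refining the net of all finite grids, the atomic
measures that reproduce `g` on the grids converge weakly. -/
lemma exists_finiteMeasures_eqOn_diff_countable [Fintype ι] [DecidableEq ι] {g : (ι → ℝ) → ℝ}
    (hg : hk0 g ≠ ⊤) :
    ∃ μ₁ μ₂ : FiniteMeasure (ι → ℝ),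
      (μ₁ + μ₂ : Measure (ι → ℝ)) Set.univ ≤ ENNReal.ofReal |g 0| + hk0 g ∧
      ∃ C : Set ℝ, C.Countable ∧
        Set.EqOn g (signedCDF μ₁ μ₂) (Set.univ.pi fun _ => Set.Icc 0 1 \ C) := by
  choose μs₁ μs₂ null₁ null₂ mass_le hμs using exists_finiteMeasures_eqOn_grid g
  lift ENNReal.ofReal |g 0| + hk0 g to NNReal using
    ENNReal.add_ne_top.2 ⟨ENNReal.ofReal_ne_top, hg⟩ with B
  have coe_mass_add (μ₁ μ₂ : FiniteMeasure (ι → ℝ)) :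
      (μ₁ + μ₂ : Measure (ι → ℝ)) Set.univ = ((μ₁.mass + μ₂.mass : NNReal) : ℝ≥0∞) := by
    simp
  simp_rw [coe_mass_add, ENNReal.coe_le_coe] at mass_le ⊢
  let L : Ultrafilter (Finset (Set.Icc (0 : ℝ) 1)) := Ultrafilter.of atTop
  have compact := isCompact_finiteMeasure_prod (E := ι → ℝ) B (isCompact_Icc (a := 0) (b := 1))
  obtain ⟨⟨μ₁, μ₂⟩, ⟨mass_lim, cube₁, cube₂⟩, lim⟩ :=
    compact.ultrafilter_le_nhds' (L.map fun D => (μs₁ D, μs₂ D)) <|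
      Ultrafilter.mem_map.2 <| Filter.univ_mem' fun D => ⟨mass_le D, null₁ D, null₂ D⟩
  refine ⟨μ₁, μ₂, mass_lim, {r | ∃ j, 0 < (μ₁ + μ₂ : Measure (ι → ℝ)) {t | t j = r}},
    countable_measure_hyperplane_pos _, fun x hx => ?_⟩
  have null_hyperplane (j : ι) : (μ₁ + μ₂ : Measure (ι → ℝ)) {t | t j = x j} = 0 := by
    by_contra h
    exact (hx j trivial).2 ⟨j, pos_iff_ne_zero.2 h⟩
  rw [FiniteMeasure.null_iff_toMeasure_null] at cube₁ cube₂
  simp_rw [FiniteMeasure.null_iff_toMeasure_null] at null₁ null₂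
  have signedCDF_lim : Tendsto (fun D => signedCDF (μs₁ D) (μs₂ D) x) L
      (𝓝 (signedCDF μ₁ μ₂ x)) :=
    (tendsto_measureReal_Icc (Prod.tendsto_iff _ _ |>.1 lim).1 null₁ cube₁ fun j =>
      (add_eq_zero.1 (null_hyperplane j)).1).sub
    (tendsto_measureReal_Icc (Prod.tendsto_iff _ _ |>.1 lim).2 null₂ cube₂ fun j =>
      (add_eq_zero.1 (null_hyperplane j)).2)
  have eventually_eq : ∀ᶠ D in L, signedCDF (μs₁ D) (μs₂ D) x = g x := by
    filter_upwards [(eventually_ge_atTop (Finset.univ.image fun k =>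
      ⟨x k, (hx k trivial).1⟩)).filter_mono (Ultrafilter.of_le atTop)] with D hD
    exact (hμs D fun k _ => ⟨_, hD (Finset.mem_image_of_mem _ (Finset.mem_univ k)), rfl⟩).symm
  exact tendsto_nhds_unique (tendsto_const_nhds.congr' (eventually_eq.mono fun _ h => h.symm))
    signedCDF_lim

end WeakLimit

section Extension

open Filter Topology

lemma eqOn_univ_pi_of_tendsto {ι R X : Type*} [Finite ι] [DecidableEq ι] [TopologicalSpace X]
    [T2Space X] {f g : (ι → R) → X} {A B : Set R} (hAB : A ⊆ B)
    (hlim : ∀ x ∈ Set.univ.pi fun _ => B, ∀ j, ∃ l : Filter R, l.NeBot ∧ A ∈ l ∧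
      Tendsto (fun r => f (Function.update x j r)) l (𝓝 (f x)) ∧
      Tendsto (fun r => g (Function.update x j r)) l (𝓝 (g x)))
    (h : Set.EqOn f g (Set.univ.pi fun _ => A)) : Set.EqOn f g (Set.univ.pi fun _ => B) := by
  have eq_of_notMem (s : Finset ι) :
      ∀ x ∈ Set.univ.pi fun _ => B, (∀ k ∉ s, x k ∈ A) → f x = g x := by
    induction s using Finset.induction_on with
    | empty => exact fun x _ hxA => h fun k _ => hxA k (Finset.notMem_empty k)
    | insert j s _ ih =>
      intro x hx hxA
      obtain ⟨l, _, hA, hf, hg⟩ := hlim x hx j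
      refine tendsto_nhds_unique_of_eventuallyEq hf hg ?_
      filter_upwards [hA] with r hr
      refine ih _ (fun k hk => ?_) fun k hk => ?_
      · rcases eq_or_ne k j with rfl | hkj
        · simpa using hAB hr
        · simpa [hkj] using hx k hk
      · rcases eq_or_ne k j with rfl | hkj
        · simpa using hr
        · simpa [hkj] using hxA k (by simp [hkj, hk])
  cases nonempty_fintype ι
  exact fun x hx => eq_of_notMem Finset.univ x hx (by simp)

lemma Icc_subset_closure_Ioo_diff {a b : ℝ} (hab : a < b) {C : Set ℝ} (hC : C.Countable) :
    Set.Icc a b ⊆ closure (Set.Ioo a b \ C) := by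
  rw [← closure_Ioo hab.ne]
  exact closure_minimal ((hC.dense_compl ℝ).open_subset_closure_inter isOpen_Ioo) isClosed_closure

variable {ι : Type*}

variable (ι) in
/-- The half-open cube `[0,1)^ι`. -/
def halfOpenCube : Set (ι → ℝ) :=
  {t | ∀ j, 0 ≤ t j ∧ t j < 1}

lemma measurableSet_halfOpenCube [Countable ι] : MeasurableSet (halfOpenCube ι) := by
  simp only [halfOpenCube, Set.ofPred_forall, Set.ofPred_and]
  measurability

variable [DecidableEq ι]

/-- The continuity enjoyed by the distribution function of a signed measure on `[0,1)^ι`, as a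
function on `[0,1]^ι`. -/
structure CoordRegular (g : (ι → ℝ) → ℝ) : Prop where
  right : ∀ x : ι → ℝ, (∀ k, x k ∈ Set.Icc (0 : ℝ) 1) → ∀ j,
    ContinuousWithinAt (fun s => g (Function.update x j s)) (Set.Icc (x j) 1) (x j)
  left : ∀ x : ι → ℝ, (∀ k, x k ∈ Set.Icc (0 : ℝ) 1) → ∀ j, x j = 1 →
    ContinuousWithinAt (fun s => g (Function.update x j s)) (Set.Icc 0 (x j)) (x j)

namespace CoordRegular

variable {f g : (ι → ℝ) → ℝ}

lemma congr (hf : CoordRegular f) (h : Set.EqOn g f (Set.univ.pi fun _ => Set.Icc 0 1)) :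
    CoordRegular g := by
  have update_eq {x : ι → ℝ} (hx : ∀ k, x k ∈ Set.Icc (0 : ℝ) 1) (j : ι) {s : ℝ}
      (hs : s ∈ Set.Icc (0 : ℝ) 1) : g (Function.update x j s) = f (Function.update x j s) := by
    refine h fun k _ => ?_
    rcases eq_or_ne k j with rfl | hkj
    · simpa using hs
    · simpa [hkj] using hx k
  exact
    { right := fun x hx j => (hf.right x hx j).congr
        (fun s hs => update_eq hx j ⟨(hx j).1.trans hs.1, hs.2⟩) (update_eq hx j (hx j))
      left := fun x hx j hj => (hf.left x hx j hj).congr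
        (fun s hs => update_eq hx j ⟨hs.1, hs.2.trans hj.le⟩) (update_eq hx j (hx j)) }

lemma eqOn [Finite ι] (hf : CoordRegular f) (hg : CoordRegular g) {C : Set ℝ} (hC : C.Countable)
    (h : Set.EqOn f g (Set.univ.pi fun _ => Set.Ico 0 1 \ C)) :
    Set.EqOn f g (Set.univ.pi fun _ => Set.Icc 0 1) := by
  refine eqOn_univ_pi_of_tendsto (Set.sdiff_subset.trans Set.Ico_subset_Icc_self)
    (fun x hx j => ?_) h
  replace hx k : x k ∈ Set.Icc (0 : ℝ) 1 := hx k trivial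
  have tendsto_of_subset {F : (ι → ℝ) → ℝ} {s t : Set ℝ} (hst : s ⊆ t)
      (hF : ContinuousWithinAt (fun r => F (Function.update x j r)) t (x j)) :
      Tendsto (fun r => F (Function.update x j r)) (𝓝[s] x j) (𝓝 (F x)) := by
    simpa [ContinuousWithinAt] using hF.mono hst
  rcases (hx j).2.lt_or_eq with hlt | heq
  · have subset : Set.Ioo (x j) 1 \ C ⊆ Set.Icc (x j) 1 :=
      Set.sdiff_subset.trans Set.Ioo_subset_Icc_self
    exact ⟨𝓝[Set.Ioo (x j) 1 \ C] x j,
      mem_closure_iff_nhdsWithin_neBot.1 <|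
        Icc_subset_closure_Ioo_diff hlt hC (Set.left_mem_Icc.2 hlt.le),
      mem_of_superset self_mem_nhdsWithin fun r hr =>
        ⟨⟨(hx j).1.trans hr.1.1.le, hr.1.2⟩, hr.2⟩,
      tendsto_of_subset subset (hf.right x hx j), tendsto_of_subset subset (hg.right x hx j)⟩
  · have subset : Set.Ioo 0 1 \ C ⊆ Set.Icc 0 (x j) :=
      heq ▸ Set.sdiff_subset.trans Set.Ioo_subset_Icc_self
    exact ⟨𝓝[Set.Ioo 0 1 \ C] x j,
      mem_closure_iff_nhdsWithin_neBot.1 <| Icc_subset_closure_Ioo_diff one_pos hC (hx j),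
      mem_of_superset self_mem_nhdsWithin fun r hr => ⟨⟨hr.1.1.le, hr.1.2⟩, hr.2⟩,
      tendsto_of_subset subset (hf.left x hx j heq), tendsto_of_subset subset (hg.left x hx j heq)⟩

end CoordRegular

lemma tendsto_measureReal_Icc_update [Countable ι] {μ : Measure (ι → ℝ)} [IsFiniteMeasure μ]
    {x : ι → ℝ} {j : ι} {l : Filter ℝ} [l.IsCountablyGenerated]
    (hl : ∀ᵐ t ∂μ, ∀ᶠ r in l, t j ≤ r ↔ t j ≤ x j) :
    Tendsto (fun r => μ.real (Set.Icc 0 (Function.update x j r))) l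
      (𝓝 (μ.real (Set.Icc 0 x))) := by
  refine (ENNReal.tendsto_toReal (measure_ne_top _ _)).comp <|
    tendsto_measure_of_ae_tendsto_indicator_of_isFiniteMeasure l measurableSet_Icc
      (fun _ => measurableSet_Icc) ?_
  filter_upwards [hl] with t ht
  filter_upwards [ht] with r hr
  have le_iff : t ≤ x ↔ t j ≤ x j ∧ ∀ k ≠ j, t k ≤ x k := by
    rw [← le_update_iff, Function.update_eq_self]
  rw [Set.mem_Icc, Set.mem_Icc, le_update_iff, le_iff, hr]

variable [Countable ι] {μ μ₁ μ₂ : Measure (ι → ℝ)} [IsFiniteMeasure μ₁] [IsFiniteMeasure μ₂]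

lemma coordRegular_measureReal_Icc [IsFiniteMeasure μ] (hμ : μ (halfOpenCube ι)ᶜ = 0) :
    CoordRegular fun x => μ.real (Set.Icc 0 x) where
  right x _ j := by
    simp only [ContinuousWithinAt, Function.update_eq_self]
    refine tendsto_measureReal_Icc_update (ae_of_all _ fun t => ?_)
    rcases le_or_gt (t j) (x j) with h | h
    · filter_upwards [self_mem_nhdsWithin] with r hr using iff_of_true (h.trans hr.1) h
    · filter_upwards [nhdsWithin_le_nhds (Iio_mem_nhds h)] with r hr
        using iff_of_false (not_le.2 hr) h.not_ge
  left x _ j hj := by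
    simp only [ContinuousWithinAt, Function.update_eq_self]
    refine tendsto_measureReal_Icc_update ?_
    filter_upwards [compl_mem_ae_iff.2 hμ] with t ht
    rw [compl_compl] at ht
    have lt : t j < x j := (ht j).2.trans_eq hj.symm
    filter_upwards [nhdsWithin_le_nhds (Ioi_mem_nhds lt)] with r hr
      using iff_of_true (le_of_lt hr) lt.le

lemma coordRegular_signedCDF (h₁ : μ₁ (halfOpenCube ι)ᶜ = 0) (h₂ : μ₂ (halfOpenCube ι)ᶜ = 0) :
    CoordRegular (signedCDF μ₁ μ₂) where
  right x hx j := ((coordRegular_measureReal_Icc h₁).right x hx j).sub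
    ((coordRegular_measureReal_Icc h₂).right x hx j)
  left x hx j hj := ((coordRegular_measureReal_Icc h₁).left x hx j hj).sub
    ((coordRegular_measureReal_Icc h₂).left x hx j hj)

end Extension

section Existence

variable {ι : Type*} [Fintype ι] [DecidableEq ι] {g : (ι → ℝ) → ℝ}

lemma CoordRegular.exists_finiteMeasures (hg : CoordRegular g) (hg_top : hk0 g ≠ ⊤) :
    ∃ μ₁ μ₂ : FiniteMeasure (ι → ℝ), (μ₁ : Measure (ι → ℝ)) (halfOpenCube ι)ᶜ = 0 ∧
      (μ₂ : Measure (ι → ℝ)) (halfOpenCube ι)ᶜ = 0 ∧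
      (μ₁ + μ₂ : Measure (ι → ℝ)) Set.univ ≤ ENNReal.ofReal |g 0| + hk0 g ∧
      Set.EqOn g (signedCDF μ₁ μ₂) (Set.univ.pi fun _ => Set.Icc 0 1) := by
  obtain ⟨μ₁, μ₂, mass_le, C, hC, h⟩ := exists_finiteMeasures_eqOn_diff_countable hg_top
  have null (μ : FiniteMeasure (ι → ℝ)) :
      (μ.restrict (halfOpenCube ι) : Measure (ι → ℝ)) (halfOpenCube ι)ᶜ = 0 := by
    simp [Measure.restrict_apply measurableSet_halfOpenCube.compl]
  refine ⟨μ₁.restrict (halfOpenCube ι), μ₂.restrict (halfOpenCube ι), null μ₁, null μ₂, ?_,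
    hg.eqOn (coordRegular_signedCDF (null μ₁) (null μ₂)) hC fun x hx => ?_⟩
  · exact (add_le_add (Measure.restrict_le_self _) (Measure.restrict_le_self _)).trans mass_le
  · have restrict_real (μ : FiniteMeasure (ι → ℝ)) :
        (μ.restrict (halfOpenCube ι) : Measure (ι → ℝ)).real (Set.Icc 0 x) =
          (μ : Measure (ι → ℝ)).real (Set.Icc 0 x) := by
      rw [FiniteMeasure.restrict_measure_eq, measureReal_restrict_apply measurableSet_Icc,
        Set.inter_eq_left.2 fun t ht k => ⟨ht.1 k, (ht.2 k).trans_lt (hx k trivial).1.2⟩]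
    rw [h fun k _ => ⟨Set.Ico_subset_Icc_self (hx k trivial).1, (hx k trivial).2⟩, signedCDF,
      signedCDF, restrict_real, restrict_real]

end Existence

section Uniqueness

variable {ι : Type*} [Finite ι]

lemma ext_of_measureReal_Icc {μ μ' : Measure (ι → ℝ)} [IsFiniteMeasure μ] [IsFiniteMeasure μ']
    (hμ : μ (Set.Icc 0 1)ᶜ = 0) (hμ' : μ' (Set.Icc 0 1)ᶜ = 0)
    (h : Set.EqOn (fun x => μ.real (Set.Icc 0 x)) (fun x => μ'.real (Set.Icc 0 x))
      (Set.univ.pi fun _ => Set.Icc 0 1)) : μ = μ' := by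
  have generateFrom_Iic : MeasurableSpace.generateFrom (Set.range (Set.Iic : ℝ → Set ℝ)) =
      Real.measurableSpace := by
    rw [← borel_eq_generateFrom_Iic, BorelSpace.measurable_eq (α := ℝ)]
  have spanning : IsCountablySpanning (Set.range (Set.Iic : ℝ → Set ℝ)) :=
    ⟨fun n : ℕ => Set.Iic n, fun n => ⟨n, rfl⟩, Set.iUnion_eq_univ_iff.2 exists_nat_ge⟩
  have measure_Iic {σ : Measure (ι → ℝ)} (hσ : σ (Set.Icc 0 1)ᶜ = 0) (x : ι → ℝ) :
      σ (Set.Iic x) = σ (Set.Icc 0 (x ⊓ 1)) := by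
    refine measure_congr ?_
    filter_upwards [compl_mem_ae_iff.2 hσ] with t ht
    rw [compl_compl] at ht
    exact propext ⟨fun h => ⟨ht.1, le_inf h ht.2⟩, fun h => h.2.trans inf_le_left⟩
  have measure_Icc (x : ι → ℝ) (hx : x ≤ 1) : μ (Set.Icc 0 x) = μ' (Set.Icc 0 x) := by
    by_cases hx0 : 0 ≤ x
    · rw [← measureReal_eq_measureReal_iff]
      exact h fun k _ => ⟨hx0 k, hx k⟩
    · simp [Set.Icc_eq_empty hx0]
  refine ext_of_generate_finite _
    (generateFrom_eq_pi (fun _ => generateFrom_Iic) fun _ => spanning).symm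
    (IsPiSystem.pi fun _ => isPiSystem_Iic) ?_ ?_
  · rintro _ ⟨S, hS, rfl⟩
    choose x hx using fun k => hS k trivial
    obtain rfl : (fun k => Set.Iic (x k)) = S := funext hx
    rw [Set.pi_univ_Iic, measure_Iic hμ, measure_Iic hμ', measure_Icc _ inf_le_right]
  · rw [← measure_congr (ae_eq_univ.2 hμ), ← measure_congr (ae_eq_univ.2 hμ'), measure_Icc 1 le_rfl]

lemma posPart_null_and_negPart_null {Ω : Type*} [MeasurableSpace Ω] {ν : SignedMeasure Ω}
    {S : Set Ω} (h : ν.totalVariation S = 0) :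
    ν.toJordanDecomposition.posPart S = 0 ∧ ν.toJordanDecomposition.negPart S = 0 := by
  rwa [SignedMeasure.totalVariation, Measure.add_apply, add_eq_zero] at h

lemma signedMeasure_ext_of_Icc {ν ν' : SignedMeasure (ι → ℝ)}
    (hν : ν.totalVariation (Set.Icc 0 1)ᶜ = 0) (hν' : ν'.totalVariation (Set.Icc 0 1)ᶜ = 0)
    (h : Set.EqOn (fun x => ν (Set.Icc 0 x)) (fun x => ν' (Set.Icc 0 x))
      (Set.univ.pi fun _ => Set.Icc 0 1)) : ν = ν' := by
  obtain ⟨pos_null, neg_null⟩ := posPart_null_and_negPart_null hν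
  obtain ⟨pos_null', neg_null'⟩ := posPart_null_and_negPart_null hν'
  have add_eq_add : ν.toJordanDecomposition.posPart + ν'.toJordanDecomposition.negPart =
      ν'.toJordanDecomposition.posPart + ν.toJordanDecomposition.negPart := by
    refine ext_of_measureReal_Icc (by simp [pos_null, neg_null'])
      (by simp [pos_null', neg_null]) fun x hx => ?_
    have := h hx
    simp only [ν.apply_eq_posPart_real_sub_negPart_real measurableSet_Icc,
      ν'.apply_eq_posPart_real_sub_negPart_real measurableSet_Icc] at this
    beta_reduce
    rw [measureReal_add_apply, measureReal_add_apply]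
    linarith
  rw [← ν.toSignedMeasure_toJordanDecomposition, ← ν'.toSignedMeasure_toJordanDecomposition,
    JordanDecomposition.toSignedMeasure, JordanDecomposition.toSignedMeasure,
    sub_eq_sub_iff_add_eq_add, ← Measure.toSignedMeasure_add, ← Measure.toSignedMeasure_add]
  exact Measure.toSignedMeasure_congr add_eq_add

end Uniqueness

section SignedMeasure

lemma totalVariation_toSignedMeasure_sub_le {Ω : Type*} [MeasurableSpace Ω] (μ₁ μ₂ : Measure Ω)
    [IsFiniteMeasure μ₁] [IsFiniteMeasure μ₂] :
    (μ₁.toSignedMeasure - μ₂.toSignedMeasure).totalVariation ≤ μ₁ + μ₂ := by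
  rw [SignedMeasure.totalVariation, Measure.toJordanDecomposition_toSignedMeasure_sub]
  exact add_le_add Measure.sub_le Measure.sub_le

variable {ι : Type*}

lemma measure_compl_Icc_of_compl_halfOpenCube {μ : Measure (ι → ℝ)}
    (hμ : μ (halfOpenCube ι)ᶜ = 0) : μ (Set.Icc 0 1)ᶜ = 0 :=
  measure_mono_null (Set.compl_subset_compl.2 fun _ ht => ⟨fun k => (ht k).1, fun k => (ht k).2.le⟩)
    hμ

lemma signedMeasure_Icc_eq_signedCDF [Countable ι] (ν : SignedMeasure (ι → ℝ)) :
    (fun x => ν (Set.Icc 0 x)) =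
      signedCDF ν.toJordanDecomposition.posPart ν.toJordanDecomposition.negPart :=
  funext fun _ => ν.apply_eq_posPart_real_sub_negPart_real measurableSet_Icc

lemma coordRegular_signedMeasure_Icc [Countable ι] [DecidableEq ι] {ν : SignedMeasure (ι → ℝ)}
    (hν : ν.totalVariation (halfOpenCube ι)ᶜ = 0) : CoordRegular fun x => ν (Set.Icc 0 x) := by
  obtain ⟨pos_null, neg_null⟩ := posPart_null_and_negPart_null hν
  exact signedMeasure_Icc_eq_signedCDF ν ▸ coordRegular_signedCDF pos_null neg_null

variable [Fintype ι] [DecidableEq ι] {g : (ι → ℝ) → ℝ}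

lemma CoordRegular.exists_signedMeasure (hg : CoordRegular g) (hg_top : hk0 g ≠ ⊤) :
    ∃ ν : SignedMeasure (ι → ℝ), ν.totalVariation (halfOpenCube ι)ᶜ = 0 ∧
      ν.totalVariation Set.univ ≤ ENNReal.ofReal |g 0| + hk0 g ∧
      Set.EqOn g (fun x => ν (Set.Icc 0 x)) (Set.univ.pi fun _ => Set.Icc 0 1) := by
  obtain ⟨μ₁, μ₂, null₁, null₂, mass_le, h⟩ := hg.exists_finiteMeasures hg_top
  have variation_le := totalVariation_toSignedMeasure_sub_le (μ₁ : Measure (ι → ℝ)) μ₂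
  refine ⟨(μ₁ : Measure (ι → ℝ)).toSignedMeasure - (μ₂ : Measure (ι → ℝ)).toSignedMeasure,
    le_antisymm ((variation_le _).trans ?_) zero_le, (variation_le _).trans mass_le,
    fun x hx => ?_⟩
  · simp [null₁, null₂]
  · exact (h hx).trans (Measure.toSignedMeasure_sub_apply measurableSet_Icc).symm

lemma CoordRegular.existsUnique_signedMeasure (hg : CoordRegular g) (hg_top : hk0 g ≠ ⊤) :
    ∃! ν : SignedMeasure (ι → ℝ), ν.totalVariation (halfOpenCube ι)ᶜ = 0 ∧
      Set.EqOn g (fun x => ν (Set.Icc 0 x)) (Set.univ.pi fun _ => Set.Icc 0 1) := by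
  obtain ⟨ν, hν, -, hgν⟩ := hg.exists_signedMeasure hg_top
  exact ⟨ν, ⟨hν, hgν⟩, fun ν' ⟨hν', hgν'⟩ =>
    signedMeasure_ext_of_Icc (measure_compl_Icc_of_compl_halfOpenCube hν')
      (measure_compl_Icc_of_compl_halfOpenCube hν) (hgν'.symm.trans hgν)⟩

lemma hk0_le_totalVariation {ν : SignedMeasure (ι → ℝ)}
    (hgν : Set.EqOn g (fun x => ν (Set.Icc 0 x)) (Set.univ.pi fun _ => Set.Icc 0 1)) :
    hk0 g ≤ ν.totalVariation {0}ᶜ :=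
  hk0_le (signedMeasure_Icc_eq_signedCDF ν ▸ hgν)

lemma totalVariation_compl_zero_eq_hk0 {ν : SignedMeasure (ι → ℝ)}
    (hν : ν.totalVariation (halfOpenCube ι)ᶜ = 0)
    (hgν : Set.EqOn g (fun x => ν (Set.Icc 0 x)) (Set.univ.pi fun _ => Set.Icc 0 1)) :
    ν.totalVariation {0}ᶜ = hk0 g := by
  refine le_antisymm ?_ (hk0_le_totalVariation hgν)
  obtain ⟨ν', hν', mass_le, hgν'⟩ :=
    ((coordRegular_signedMeasure_Icc hν).congr hgν).exists_signedMeasure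
      ((hk0_le_totalVariation hgν).trans_lt (measure_lt_top _ _)).ne
  obtain rfl : ν' = ν := signedMeasure_ext_of_Icc (measure_compl_Icc_of_compl_halfOpenCube hν')
    (measure_compl_Icc_of_compl_halfOpenCube hν) (hgν'.symm.trans hgν)
  have abs_le : ENNReal.ofReal |g 0| ≤ ν'.totalVariation {0} := by
    rw [hgν fun k _ => by simp, ← Real.enorm_eq_ofReal_abs]
    simpa using ν'.enorm_le_totalVariation {0}
  refine (ENNReal.add_le_add_iff_left (measure_ne_top ν'.totalVariation {0})).1 ?_
  calc ν'.totalVariation {0} + ν'.totalVariation {0}ᶜ = ν'.totalVariation Set.univ :=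
        measure_add_measure_compl (measurableSet_singleton 0)
    _ ≤ ENNReal.ofReal |g 0| + hk0 g := mass_le
    _ ≤ ν'.totalVariation {0} + hk0 g := by gcongr

end SignedMeasure

section Restriction

variable {ι : Type*}

lemma box_eq_Icc_inter_halfOpenCube (x : ι → ℝ) :
    {t : ι → ℝ | ∀ j, 0 ≤ t j ∧ t j ≤ x j ∧ t j < 1} = Set.Icc 0 x ∩ halfOpenCube ι := by
  ext t
  simp only [Set.mem_ofPred_eq, Set.mem_inter_iff, Set.mem_Icc, Pi.le_def, Pi.zero_apply,
    halfOpenCube, forall_and]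
  tauto

lemma restrict_halfOpenCube_Icc [Countable ι] (ν : SignedMeasure (ι → ℝ)) (x : ι → ℝ) :
    ν.restrict (halfOpenCube ι) (Set.Icc 0 x) =
      ν {t : ι → ℝ | ∀ j, 0 ≤ t j ∧ t j ≤ x j ∧ t j < 1} := by
  rw [ν.restrict_apply measurableSet_halfOpenCube measurableSet_Icc, box_eq_Icc_inter_halfOpenCube]

lemma totalVariation_restrict {Ω : Type*} [MeasurableSpace Ω] (ν : SignedMeasure Ω) {S : Set Ω}
    (hS : MeasurableSet S) :
    SignedMeasure.totalVariation (ν.restrict S) = ν.totalVariation.restrict S := by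
  simp_rw [SignedMeasure.totalVariation_eq_variation, VectorMeasure.variation_restrict hS]

lemma restrict_eq_self_of_totalVariation_compl {Ω : Type*} [MeasurableSpace Ω]
    {ν : SignedMeasure Ω} {S : Set Ω} (hS : MeasurableSet S) (hν : ν.totalVariation Sᶜ = 0) :
    ν.restrict S = ν := by
  have restrict_compl : ν.restrict Sᶜ = 0 := by
    ext A hA
    rw [ν.restrict_apply hS.compl hA]
    exact ν.null_of_totalVariation_zero (measure_mono_null Set.inter_subset_right hν)
  conv_rhs => rw [← VectorMeasure.restrict_add_restrict_compl (v := ν) hS, restrict_compl, add_zero]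

lemma totalVariation_halfOpenCube_diff_zero_eq_hk0 [Fintype ι] [DecidableEq ι]
    {g : (ι → ℝ) → ℝ} {ν : SignedMeasure (ι → ℝ)}
    (hgν : Set.EqOn g (fun x => ν.restrict (halfOpenCube ι) (Set.Icc 0 x))
      (Set.univ.pi fun _ => Set.Icc 0 1)) :
    ν.totalVariation (halfOpenCube ι \ {0}) = hk0 g := by
  have variation_restrict := totalVariation_restrict ν (measurableSet_halfOpenCube (ι := ι))
  have restrict_null :
      SignedMeasure.totalVariation (ν.restrict (halfOpenCube ι)) (halfOpenCube ι)ᶜ = 0 := by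
    rw [variation_restrict, Measure.restrict_apply measurableSet_halfOpenCube.compl,
      Set.compl_inter_self, measure_empty]
  rw [← totalVariation_compl_zero_eq_hk0 restrict_null hgν, variation_restrict,
    Measure.restrict_apply (measurableSet_singleton 0).compl, Set.sdiff_eq, Set.inter_comm]

end Restriction

theorem statement15_general {ι : Type*} [Fintype ι] [DecidableEq ι] :
    (∀ g : (ι → ℝ) → ℝ,
      hk0 g ≠ ⊤ →
      (∀ x : ι → ℝ, (∀ k, x k ∈ Set.Icc (0 : ℝ) 1) → ∀ j,
        ContinuousWithinAt (fun s => g (Function.update x j s))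
          (Set.Icc (x j) 1) (x j)) →
      (∀ x : ι → ℝ, (∀ k, x k ∈ Set.Icc (0 : ℝ) 1) → ∀ j, x j = 1 →
        ContinuousWithinAt (fun s => g (Function.update x j s))
          (Set.Icc 0 (x j)) (x j)) →
      ∃! ν : SignedMeasure (ι → ℝ),
        ν.totalVariation {t : ι → ℝ | ∀ j, 0 ≤ t j ∧ t j < 1}ᶜ = 0 ∧
        ∀ x : ι → ℝ, (∀ k, x k ∈ Set.Icc (0 : ℝ) 1) →
          g x = ν {t : ι → ℝ | ∀ j, 0 ≤ t j ∧ t j ≤ x j ∧ t j < 1}) ∧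
    (∀ (g : (ι → ℝ) → ℝ) (ν : SignedMeasure (ι → ℝ)),
      (∀ x : ι → ℝ, (∀ k, x k ∈ Set.Icc (0 : ℝ) 1) →
        g x = ν {t : ι → ℝ | ∀ j, 0 ≤ t j ∧ t j ≤ x j ∧ t j < 1}) →
      hk0 g ≠ ⊤ ∧
        ν.totalVariation ({t : ι → ℝ | ∀ j, 0 ≤ t j ∧ t j < 1} \ {fun _ => 0}) = hk0 g) := by
  simp_rw [← restrict_halfOpenCube_Icc]
  change (∀ g, _ → _ → _ → ∃! ν : SignedMeasure (ι → ℝ),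
    ν.totalVariation (halfOpenCube ι)ᶜ = 0 ∧ _) ∧
    ∀ g (ν : SignedMeasure (ι → ℝ)), _ → _ ∧ ν.totalVariation (halfOpenCube ι \ {0}) = _
  have restrict_eq_self {ν : SignedMeasure (ι → ℝ)} (hν : ν.totalVariation (halfOpenCube ι)ᶜ = 0) :
      ν.restrict (halfOpenCube ι) = ν :=
    restrict_eq_self_of_totalVariation_compl measurableSet_halfOpenCube hν
  refine ⟨fun g hg_top right left => ?_, fun g ν hgν => ?_⟩
  · obtain ⟨ν, ⟨hν, hgν⟩, unique⟩ :=
      (CoordRegular.mk right left).existsUnique_signedMeasure hg_top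
    refine ⟨ν, ⟨hν, fun x hx => ?_⟩, fun ν' ⟨hν', hgν'⟩ => unique ν' ⟨hν', fun x hx => ?_⟩⟩
    · rw [restrict_eq_self hν]
      exact hgν fun k _ => hx k
    · rw [hgν' x fun k => hx k trivial, restrict_eq_self hν']
  · have variation_eq := totalVariation_halfOpenCube_diff_zero_eq_hk0
      fun x hx => hgν x fun k => hx k trivial
    exact ⟨variation_eq ▸ measure_ne_top _ _, variation_eq⟩

/-- (1) A function on `[0,1]^m` of finite HK0 variation which is
coordinate-wise right-continuous, and coordinate-wise left-continuous at boundary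
points in each coordinate equal to `1`, is the "CDF" `x ↦ ν([0,x] ∩ [0,1)^m)` of a
unique finite signed Borel measure `ν` concentrated on `[0,1)^m`.
(2) Conversely any such CDF has finite HK0 variation, equal to `|ν|([0,1)^m \ {0})`. -/
theorem statement15 (m : ℕ) (hm : 1 ≤ m) :
    (∀ g : (Fin m → ℝ) → ℝ,
      hk0 g ≠ ⊤ →
      (∀ x : Fin m → ℝ, (∀ k, x k ∈ Set.Icc (0 : ℝ) 1) → ∀ j,
        ContinuousWithinAt (fun s => g (Function.update x j s))
          (Set.Icc (x j) 1) (x j)) →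
      (∀ x : Fin m → ℝ, (∀ k, x k ∈ Set.Icc (0 : ℝ) 1) → ∀ j, x j = 1 →
        ContinuousWithinAt (fun s => g (Function.update x j s))
          (Set.Icc 0 (x j)) (x j)) →
      ∃! ν : MeasureTheory.SignedMeasure (Fin m → ℝ),
        ν.totalVariation {t : Fin m → ℝ | ∀ j, 0 ≤ t j ∧ t j < 1}ᶜ = 0 ∧
        ∀ x : Fin m → ℝ, (∀ k, x k ∈ Set.Icc (0 : ℝ) 1) →
          g x = ν {t : Fin m → ℝ | ∀ j, 0 ≤ t j ∧ t j ≤ x j ∧ t j < 1}) ∧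
    (∀ (g : (Fin m → ℝ) → ℝ) (ν : MeasureTheory.SignedMeasure (Fin m → ℝ)),
      ν.totalVariation {t : Fin m → ℝ | ∀ j, 0 ≤ t j ∧ t j < 1}ᶜ = 0 →
      (∀ x : Fin m → ℝ, (∀ k, x k ∈ Set.Icc (0 : ℝ) 1) →
        g x = ν {t : Fin m → ℝ | ∀ j, 0 ≤ t j ∧ t j ≤ x j ∧ t j < 1}) →
      hk0 g ≠ ⊤ ∧
        ν.totalVariation
            ({t : Fin m → ℝ | ∀ j, 0 ≤ t j ∧ t j < 1} \ {fun _ => 0}) = hk0 g) :=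
  ⟨statement15_general.1, fun g ν _ => statement15_general.2 g ν⟩
end

section
/- Let d ≥ 1 and let f : ℝ^d → ℝ be a C^∞ function. Then the restriction of f to [0,1]^d admits a MARS representation: there exist a₀ ∈ ℝ and signed measures {ν_S} forming a MARS representation with f(x) = f_{a₀,{ν_S}}(x) for every x ∈ [0,1]^d and with variation V({ν_S}) = Σ_{β∈{0,1,2}^d, max_j β_j = 2} ∫_{T̄^(β)} |f^(β)|, where T̄^(β) = ∏_{k=1}^d T̄_k with T̄_k = [0,1] if β_k = max_j β_j and T̄_k = {0} otherwise, and the integral is the Lebesgue integral over the coordinates k with β_k = max_j β_j of |f^(β)| evaluated with the remaining coordinates set to 0. -/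
open Finset MeasureTheory
open scoped ENNReal

/-- A MARS representation: a constant `a0` together with, for each (nonempty) subset `S`
of coordinates, a finite signed Borel measure on `ℝ^S` concentrated on `Π_{j∈S} [0,1)`. -/
structure MarsRep (d : ℕ) where
  a0 : ℝ
  ν : ∀ S : Finset (Fin d), SignedMeasure ({j // j ∈ S} → ℝ)
  conc : ∀ S : Finset (Fin d),
    (ν S).totalVariation {t : {j // j ∈ S} → ℝ | ∀ j, 0 ≤ t j ∧ t j < 1}ᶜ = 0

/-- Integration of a real function against a finite signed measure. -/
noncomputable def sIntegral {α : Type*} [MeasurableSpace α]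
    (ν : SignedMeasure α) (f : α → ℝ) : ℝ :=
  (∫ t, f t ∂ν.toJordanDecomposition.posPart) -
    (∫ t, f t ∂ν.toJordanDecomposition.negPart)

/-- The function `f_{a₀,{ν_S}}` associated with a MARS representation. -/
noncomputable def marsFun {d : ℕ} (R : MarsRep d) (x : Fin d → ℝ) : ℝ :=
  R.a0 + ∑ S : Finset (Fin d),
    if S.Nonempty then
      sIntegral (R.ν S) fun t => ∏ j : {j // j ∈ S}, max (x j.1 - t j) 0
    else 0

/-- The variation `V({ν_S}) = Σ_{∅ ≠ S} |ν_S|(Π_{j∈S}[0,1) \ {0})` of a MARS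
representation. -/
noncomputable def marsVar {d : ℕ} (R : MarsRep d) : ℝ≥0∞ :=
  ∑ S : Finset (Fin d),
    if S.Nonempty then
      (R.ν S).totalVariation
        ({t : {j // j ∈ S} → ℝ | ∀ j, 0 ≤ t j ∧ t j < 1} \ {fun _ => 0})
    else 0

/-- Partial derivative in the `k`-th coordinate direction. -/
noncomputable def pderiv1 {m : ℕ} (k : Fin m) (g : (Fin m → ℝ) → ℝ) :
    (Fin m → ℝ) → ℝ :=
  fun x => fderiv ℝ g x (Pi.single k 1)

/-- The mixed partial derivative `g^(β)` for a multi-index `β ∈ ℕ^m`. -/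
noncomputable def pderivMulti {m : ℕ} (β : Fin m → ℕ)
    (g : (Fin m → ℝ) → ℝ) : (Fin m → ℝ) → ℝ :=
  (List.finRange m).foldr (fun k h => (pderiv1 k)^[β k] h) g

/-!
For `0 ≤ x ≤ 1`, Taylor's formula of order two with integral remainder reads
`h x = h 0 + x * h' 0 + ∫ s in [0, 1], max (x - s) 0 * h'' s`. Applying it in every coordinate
writes `f x` as a sum over `β ∈ {0, 1, 2}^d`, in which `f^(β)` is evaluated at `t k` in the
coordinates with `β k = 2` and at `0` in the others, and is weighted by `∏ max (x k - t k) 0` over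
the support of `β`, with `t k = 0` where `β k = 1`. Collecting the `β` with support `S` gives `ν_S`.
These pieces of `ν_S` live on different faces `{t k = 0 ↔ β k = 1}` up to null sets, so they are
mutually singular and their total variations add up. The piece of `ν_S` that charges the origin is
the one without an entry `2`, which is why the variation keeps exactly the `β` with `max β = 2`.
-/

section SignedDensity

variable {α : Type*} [MeasurableSpace α] {μ : Measure α} {g h : α → ℝ}

lemma totalVariation_withDensityᵥ (hg : Integrable g μ) :
    SignedMeasure.totalVariation (μ.withDensityᵥ g) = μ.withDensity fun a => ‖g a‖ₑ := by
  rw [SignedMeasure.totalVariation_eq_variation, Measure.variation_withDensityᵥ hg]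

lemma toJordanDecomposition_withDensityᵥ (hgm : Measurable g) (hg : Integrable g μ) :
    (SignedMeasure.toJordanDecomposition (μ.withDensityᵥ g)).posPart =
        μ.withDensity (fun a => ENNReal.ofReal (g a)) ∧
      (SignedMeasure.toJordanDecomposition (μ.withDensityᵥ g)).negPart =
        μ.withDensity (fun a => ENNReal.ofReal (-g a)) := by
  rw [SignedMeasure.toJordanDecomposition_eq_of_eq_add_withDensity hgm hg
    VectorMeasure.MutuallySingular.zero_left (zero_add _).symm]
  simp only [SignedMeasure.toJordanDecomposition_zero, JordanDecomposition.zero_posPart,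
    JordanDecomposition.zero_negPart, zero_add, and_self]

lemma integrable_max_zero_mul (hgm : AEStronglyMeasurable g μ)
    (hhm : AEStronglyMeasurable h μ) (hgh : Integrable (fun a => g a * h a) μ) :
    Integrable (fun a => max (g a) 0 * h a) μ := by
  refine hgh.mono ((hgm.sup aestronglyMeasurable_const).mul hhm) (.of_forall fun a => ?_)
  rw [norm_mul, norm_mul]
  gcongr
  exact (abs_of_nonneg (le_max_right (g a) 0)).trans_le (max_le (le_abs_self _) (abs_nonneg _))

lemma sIntegral_withDensityᵥ (hgm : Measurable g) (hg : Integrable g μ)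
    (hhm : AEStronglyMeasurable h μ) (hgh : Integrable (fun a => g a * h a) μ) :
    sIntegral (μ.withDensityᵥ g) h = ∫ a, g a * h a ∂μ := by
  have hpos := integrable_max_zero_mul hgm.aestronglyMeasurable hhm hgh
  have hneg : Integrable (fun a => max (-g a) 0 * h a) μ :=
    integrable_max_zero_mul hgm.neg.aestronglyMeasurable hhm (by simpa using hgh.neg)
  rw [sIntegral, (toJordanDecomposition_withDensityᵥ hgm hg).1,
    (toJordanDecomposition_withDensityᵥ hgm hg).2,
    integral_withDensity_eq_integral_toReal_smul (by fun_prop) (by simp),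
    integral_withDensity_eq_integral_toReal_smul (by fun_prop) (by simp)]
  simp only [ENNReal.toReal_ofReal', smul_eq_mul]
  rw [← integral_sub hpos hneg]
  simp only [← sub_mul, max_zero_sub_max_neg_zero_eq_self]

variable {ι Ω : Type*} [MeasurableSpace Ω] {s : Finset ι} {P : Measure Ω} {φ : ι → Ω → α}

lemma integrable_sum_map_iff (hφ : ∀ i, Measurable (φ i)) (hgm : Measurable g) :
    Integrable g (∑ i ∈ s, P.map (φ i)) ↔ ∀ i ∈ s, Integrable (fun ω => g (φ i ω)) P := by
  rw [integrable_finsetSum_measure]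
  exact forall₂_congr fun i _ =>
    integrable_map_measure hgm.aestronglyMeasurable (hφ i).aemeasurable

lemma integral_sum_map (hφ : ∀ i, Measurable (φ i)) (hgm : Measurable g)
    (hg : ∀ i ∈ s, Integrable (fun ω => g (φ i ω)) P) :
    ∫ a, g a ∂(∑ i ∈ s, P.map (φ i)) = ∑ i ∈ s, ∫ ω, g (φ i ω) ∂P := by
  rw [integral_finsetSum_measure
    ((integrable_finsetSum_measure).1 ((integrable_sum_map_iff hφ hgm).2 hg))]
  exact sum_congr rfl fun i _ => integral_map (hφ i).aemeasurable hgm.aestronglyMeasurable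

lemma setLIntegral_sum_map (hφ : ∀ i, Measurable (φ i)) {g : α → ℝ≥0∞} (hgm : Measurable g)
    {A : Set α} (hA : MeasurableSet A) :
    ∫⁻ a in A, g a ∂(∑ i ∈ s, P.map (φ i)) = ∑ i ∈ s, ∫⁻ ω in φ i ⁻¹' A, g (φ i ω) ∂P := by
  rw [← lintegral_indicator hA, lintegral_finsetSum_measure]
  refine sum_congr rfl fun i _ => ?_
  rw [lintegral_indicator hA, setLIntegral_map hA hgm (hφ i)]

end SignedDensity

section ProductMeasure

variable {ι : Type*} [Fintype ι] [DecidableEq ι] {X : ι → Type*} [∀ i, MeasurableSpace (X i)]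
  (μ : ∀ i, Measure (X i)) [∀ i, IsProbabilityMeasure (μ i)] (k : ι)

lemma measurePreserving_update :
    MeasurePreserving (fun p : (∀ i, X i) × X k => Function.update p.1 k p.2)
      ((Measure.pi μ).prod (μ k)) (Measure.pi μ) := by
  have hmeas : Measurable fun p : (∀ i, X i) × X k => Function.update p.1 k p.2 :=
    measurable_update'
  refine ⟨hmeas, (Measure.pi_eq fun s hs => ?_).symm⟩
  have hpre : (fun p : (∀ i, X i) × X k => Function.update p.1 k p.2) ⁻¹' Set.univ.pi s =
      Set.univ.pi (Function.update s k Set.univ) ×ˢ s k := by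
    ext ⟨t, u⟩
    simp only [Set.mem_preimage, Set.mem_pi, Set.mem_univ, forall_const, Set.mem_prod]
    rw [Function.forall_update_iff t fun i a => a ∈ s i,
      Function.forall_update_iff s fun i a => t i ∈ a]
    simp [and_comm]
  rw [Measure.map_apply hmeas (.univ_pi hs), hpre, Measure.prod_prod, Measure.pi_pi]
  simp only [Function.apply_update fun i => μ i]
  rw [prod_update_of_mem (mem_univ k), measure_univ, one_mul, mul_comm,
    ← prod_eq_mul_prod_sdiff_singleton_of_mem (mem_univ k) fun i => μ i (s i)]

variable {E : Type*} [NormedAddCommGroup E] [NormedSpace ℝ E] {G : (∀ i, X i) → E}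

lemma integrable_integral_update (hG : Integrable G (Measure.pi μ)) :
    Integrable (fun t => ∫ s, G (Function.update t k s) ∂μ k) (Measure.pi μ) :=
  ((measurePreserving_update μ k).integrable_comp_of_integrable hG).integral_prod_left

lemma integral_integral_update (hG : Integrable G (Measure.pi μ)) :
    ∫ t, ∫ s, G (Function.update t k s) ∂μ k ∂Measure.pi μ = ∫ t, G t ∂Measure.pi μ := by
  have hupd := measurePreserving_update μ k
  calc _ = ∫ p, G (Function.update p.1 k p.2) ∂(Measure.pi μ).prod (μ k) :=
        (integral_prod _ (hupd.integrable_comp_of_integrable hG)).symm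
    _ = _ := by
        rw [← integral_map hupd.measurable.aemeasurable
          (by simpa only [hupd.map_eq] using hG.aestronglyMeasurable), hupd.map_eq]

end ProductMeasure

section UnitCube

/-- The uniform distribution on `[0, 1]`, as a measure on `ℝ`. -/
noncomputable def unitIntervalMeasure : Measure ℝ := volume.restrict (Set.Icc 0 1)

instance : IsProbabilityMeasure unitIntervalMeasure := ⟨by simp [unitIntervalMeasure]⟩

/-- The uniform distribution on the cube `[0, 1]^ι`, as a measure on `ι → ℝ`. -/
noncomputable def unitCubeMeasure (ι : Type*) [Fintype ι] : Measure (ι → ℝ) :=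
  Measure.pi fun _ => unitIntervalMeasure

variable {ι : Type*} [Fintype ι]

instance : IsProbabilityMeasure (unitCubeMeasure ι) := by
  unfold unitCubeMeasure; infer_instance

lemma unitCubeMeasure_eq_restrict :
    unitCubeMeasure ι = volume.restrict (Set.univ.pi fun _ => Set.Icc 0 1) := by
  rw [unitCubeMeasure, unitIntervalMeasure, volume_pi, Measure.restrict_pi_pi]

lemma integrable_unitCubeMeasure {G : (ι → ℝ) → ℝ} (hG : Continuous G) :
    Integrable G (unitCubeMeasure ι) := by
  rw [unitCubeMeasure_eq_restrict]
  exact hG.continuousOn.integrableOn_compact (isCompact_univ_pi fun _ => isCompact_Icc)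

lemma ae_mem_Ioo_unitCubeMeasure : ∀ᵐ t ∂unitCubeMeasure ι, ∀ k, t k ∈ Set.Ioo (0 : ℝ) 1 := by
  have hIoo : ∀ᵐ s ∂unitIntervalMeasure, s ∈ Set.Ioo (0 : ℝ) 1 := by
    rw [unitIntervalMeasure, ← restrict_Ioo_eq_restrict_Icc]
    exact ae_restrict_mem measurableSet_Ioo
  exact ae_all_iff.2 fun k =>
    (measurePreserving_eval (fun _ : ι => unitIntervalMeasure) k).quasiMeasurePreserving.ae hIoo

lemma map_restrict_unitCubeMeasure (S : Finset ι) :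
    (unitCubeMeasure ι).map S.restrict = unitCubeMeasure S := by
  rw [unitCubeMeasure, ← Measure.infinitePi_eq_pi, Measure.infinitePi_map_restrict]
  rfl

end UnitCube

section HingeTaylor

lemma setIntegral_Icc_max_sub_zero_mul {x : ℝ} (hx : x ∈ Set.Icc (0 : ℝ) 1) (φ : ℝ → ℝ) :
    ∫ s in Set.Icc (0 : ℝ) 1, max (x - s) 0 * φ s = ∫ s in (0 : ℝ)..x, (x - s) * φ s := by
  have hvanish : ∀ s ∈ Set.Icc (0 : ℝ) 1 \ Set.Icc 0 x, max (x - s) 0 * φ s = 0 := by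
    rintro s ⟨hs, hsx⟩
    rw [max_eq_right (sub_nonpos.2 (le_of_not_ge fun h => hsx ⟨hs.1, h⟩)), zero_mul]
  rw [setIntegral_eq_of_subset_of_forall_sdiff_eq_zero measurableSet_Icc
    (Set.Icc_subset_Icc_right hx.2) hvanish, intervalIntegral.integral_of_le hx.1,
    ← integral_Icc_eq_integral_Ioc]
  refine setIntegral_congr_fun measurableSet_Icc fun s hs => ?_
  rw [max_eq_left (sub_nonneg.2 hs.2)]

lemma eq_add_mul_add_integral_max_sub_zero {h h' h'' : ℝ → ℝ} (hh : ∀ s, HasDerivAt h (h' s) s)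
    (hh' : ∀ s, HasDerivAt h' (h'' s) s) (hcont : Continuous h'') {x : ℝ}
    (hx : x ∈ Set.Icc (0 : ℝ) 1) :
    h x = h 0 + x * h' 0 + ∫ s, max (x - s) 0 * h'' s ∂unitIntervalMeasure := by
  have hcont' : Continuous h' := continuous_iff_continuousAt.2 fun s => (hh' s).continuousAt
  have hparts : ∫ s in (0 : ℝ)..x, (x - s) * h'' s = -(x * h' 0) + ∫ s in (0 : ℝ)..x, h' s := by
    rw [intervalIntegral.integral_mul_deriv_eq_deriv_mul
      (fun s _ => (hasDerivAt_id' s).const_sub x) (fun s _ => hh' s)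
      intervalIntegrable_const (hcont.intervalIntegrable _ _)]
    simp
  rw [unitIntervalMeasure, setIntegral_Icc_max_sub_zero_mul hx, hparts,
    intervalIntegral.integral_eq_sub_of_hasDerivAt (fun s _ => hh s)
      (hcont'.intervalIntegrable _ _)]
  ring

end HingeTaylor

section PartialDerivatives

variable {m : ℕ} {g : (Fin m → ℝ) → ℝ} {n : WithTop ℕ∞}

lemma contDiff_pderiv1 (k : Fin m) (hg : ContDiff ℝ (n + 1) g) : ContDiff ℝ n (pderiv1 k g) :=
  (hg.fderiv_right le_rfl).clm_apply contDiff_const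

lemma contDiff_iterate_pderiv1 (k : Fin m) (i : ℕ) (hg : ContDiff ℝ (n + i) g) :
    ContDiff ℝ n ((pderiv1 k)^[i] g) := by
  induction i generalizing n with
  | zero => simpa using hg
  | succ i ih =>
    rw [Function.iterate_succ_apply']
    refine contDiff_pderiv1 k (ih (hg.of_le ?_))
    rw [Nat.cast_add, Nat.cast_one, add_assoc, add_comm (1 : WithTop ℕ∞)]

lemma hasDerivAt_comp_update (k : Fin m) (hg : Differentiable ℝ g) (z : Fin m → ℝ) (s : ℝ) :
    HasDerivAt (fun s => g (Function.update z k s)) (pderiv1 k g (Function.update z k s)) s :=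
  (hg _).hasFDerivAt.comp_hasDerivAt s (hasDerivAt_update z k s)

/-- The mixed partial derivative `g^(β)` restricted to the coordinates listed in `l`: each `k` in
`l` contributes `β k` differentiations, the last entry of `l` being differentiated first. -/
noncomputable def pderivList (l : List (Fin m)) (β : Fin m → ℕ) (g : (Fin m → ℝ) → ℝ) :
    (Fin m → ℝ) → ℝ :=
  l.foldr (fun k h => (pderiv1 k)^[β k] h) g

lemma pderivList_cons (k : Fin m) (l : List (Fin m)) (β : Fin m → ℕ) :
    pderivList (k :: l) β g = (pderiv1 k)^[β k] (pderivList l β g) :=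
  rfl

lemma pderivList_congr {l : List (Fin m)} {β γ : Fin m → ℕ} (h : ∀ k ∈ l, β k = γ k) :
    pderivList l β g = pderivList l γ g :=
  List.foldr_ext _ _ _ fun k hk _ => by rw [h k hk]

lemma pderivList_zero (l : List (Fin m)) : pderivList l 0 g = g := by
  induction l with
  | nil => rfl
  | cons _ _ ih => exact ih

lemma contDiff_pderivList (l : List (Fin m)) (β : Fin m → ℕ)
    (hg : ContDiff ℝ (n + (l.map β).sum) g) : ContDiff ℝ n (pderivList l β g) := by
  induction l generalizing n with
  | nil => simpa [pderivList] using hg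
  | cons k l ih =>
    refine contDiff_iterate_pderiv1 k _ (ih (hg.of_le ?_))
    rw [List.map_cons, List.sum_cons, Nat.cast_add, add_assoc]

end PartialDerivatives

section TaylorExpansion

/-- The point at which the term of order `i` in the expansion
`h x = h 0 + x * h' 0 + ∫ s in [0, 1], max (x - s) 0 * h'' s` evaluates the `i`-th derivative: the
integration variable for `i = 2`, the origin otherwise. -/
noncomputable def taylorNode (i : ℕ) (t : ℝ) : ℝ := if i = 2 then t else 0

/-- The factor in front of the `i`-th derivative in the expansion
`h x = h 0 + x * h' 0 + ∫ s in [0, 1], max (x - s) 0 * h'' s`. For `i = 1` the factor `x` is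
written as the hinge `max (x - 0) 0`, with which it agrees for `0 ≤ x`. -/
noncomputable def taylorWeight (i : ℕ) (x t : ℝ) : ℝ :=
  if i = 0 then 1 else max (x - taylorNode i t) 0

@[fun_prop]
lemma continuous_taylorNode (i : ℕ) : Continuous (taylorNode i) := by
  unfold taylorNode; split_ifs <;> fun_prop

@[fun_prop]
lemma continuous_taylorWeight (i : ℕ) (x : ℝ) : Continuous (taylorWeight i x) := by
  unfold taylorWeight; split_ifs <;> fun_prop

/-- The point with coordinates `t k` where `β k = 2` and `0` elsewhere. -/
noncomputable def taylorPoint {ι : Type*} (β : ι → ℕ) (t : ι → ℝ) : ι → ℝ :=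
  fun k => taylorNode (β k) (t k)

@[fun_prop]
lemma continuous_taylorPoint {ι : Type*} (β : ι → ℕ) : Continuous (taylorPoint β) := by
  unfold taylorPoint; fun_prop

/-- The multi-indices in `{0, 1, 2}^ι` that vanish outside `s`. -/
def multiIndices {ι : Type*} [Fintype ι] [DecidableEq ι] (s : Finset ι) : Finset (ι → ℕ) :=
  Fintype.piFinset (s.piecewise (fun _ => range 3) fun _ => {0})

lemma multiIndices_univ {ι : Type*} [Fintype ι] [DecidableEq ι] :
    multiIndices (univ : Finset ι) = Fintype.piFinset fun _ => range 3 := by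
  rw [multiIndices, piecewise_univ]

lemma multiIndices_empty {ι : Type*} [Fintype ι] [DecidableEq ι] :
    multiIndices (∅ : Finset ι) = {0} := by
  rw [multiIndices, piecewise_empty, Fintype.piFinset_singleton]; rfl

lemma le_two_of_mem_multiIndices {ι : Type*} [Fintype ι] [DecidableEq ι] {s : Finset ι}
    {β : ι → ℕ} (hβ : β ∈ multiIndices s) (k : ι) : β k ≤ 2 := by
  have hβk := Fintype.mem_piFinset.1 hβ k
  by_cases hk : k ∈ s
  · simpa [hk, Nat.lt_succ_iff] using hβk
  · simp_all

lemma sum_piFinset_update {ι M : Type*} [Fintype ι] [DecidableEq ι] {κ : ι → Type*}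
    [AddCommMonoid M] {s : ∀ i, Finset (κ i)} {k : ι} {b : κ k} (hb : s k = {b})
    (t : Finset (κ k)) (F : (∀ i, κ i) → M) :
    ∑ β ∈ Fintype.piFinset (Function.update s k t), F β =
      ∑ β ∈ Fintype.piFinset s, ∑ i ∈ t, F (Function.update β k i) := by
  have hmem (β : ∀ i, κ i) (u : Finset (κ k)) :
      β ∈ Fintype.piFinset (Function.update s k u) ↔ β k ∈ u ∧ ∀ j ≠ k, β j ∈ s j := by
    rw [Fintype.mem_piFinset, Function.forall_update_iff s fun j a => β j ∈ a]
  have hs : Function.update s k {b} = s := by rw [← hb, Function.update_eq_self]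
  rw [← sum_product']
  refine sum_nbij' (fun β => (Function.update β k b, β k)) (fun p => Function.update p.1 k p.2)
    ?_ ?_ ?_ ?_ ?_
  · intro β hβ
    rw [hmem] at hβ
    rw [mem_product, ← hs, hmem]
    simp +contextual [hβ]
  · rintro ⟨β, i⟩ hβi
    rw [mem_product, ← hs, hmem] at hβi
    rw [hmem]
    simp +contextual [hβi]
  · simp
  · rintro ⟨β, i⟩ hβi
    rw [mem_product, ← hs, hmem, mem_singleton] at hβi
    simp [← hβi.1.1]
  · simp

variable {m : ℕ} {f g : (Fin m → ℝ) → ℝ} {l : List (Fin m)} {β : Fin m → ℕ}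

lemma eq_sum_integral_taylorWeight_mul (k : Fin m) (hg : ContDiff ℝ 2 g) (z : Fin m → ℝ)
    (hz : z k ∈ Set.Icc (0 : ℝ) 1) :
    g z = ∑ i ∈ range 3, ∫ s, taylorWeight i (z k) s *
      ((pderiv1 k)^[i] g) (Function.update z k (taylorNode i s)) ∂unitIntervalMeasure := by
  have hg' : ContDiff ℝ 1 (pderiv1 k g) := contDiff_pderiv1 k hg
  have hg'' : ContDiff ℝ 0 (pderiv1 k (pderiv1 k g)) := contDiff_pderiv1 k hg'
  have htaylor := eq_add_mul_add_integral_max_sub_zero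
    (hasDerivAt_comp_update k (hg.differentiable two_ne_zero) z)
    (hasDerivAt_comp_update k (hg'.differentiable one_ne_zero) z)
    (hg''.continuous.comp (continuous_const.update k continuous_id)) hz
  rw [Function.update_eq_self] at htaylor
  simp [htaylor, sum_range_succ, taylorWeight, taylorNode, hz.1]

lemma contDiff_pderivList_of_le_two {n : ℕ} (hf : ContDiff ℝ (n + 2 * l.length : ℕ) f)
    (hβ : ∀ k, β k ≤ 2) : ContDiff ℝ n (pderivList l β f) := by
  refine contDiff_pderivList l β (hf.of_le ?_)
  have hsum : (l.map β).sum ≤ 2 * l.length := by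
    simpa [mul_comm] using (l.map β).sum_le_card_nsmul 2 (by simpa using fun k _ => hβ k)
  exact_mod_cast Nat.add_le_add_left hsum n

/-- The summand of index `β` when `f x` is Taylor expanded to second order in the coordinates
listed in `l`, before integration over `t`; the other coordinates are kept at `x`. -/
noncomputable def taylorTerm (f : (Fin m → ℝ) → ℝ) (x : Fin m → ℝ) (l : List (Fin m))
    (β : Fin m → ℕ) (t : Fin m → ℝ) : ℝ :=
  (∏ j ∈ l.toFinset, taylorWeight (β j) (x j) (t j)) *
    pderivList l β f (l.toFinset.piecewise (taylorPoint β t) x)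

lemma taylorTerm_nil (f : (Fin m → ℝ) → ℝ) (x : Fin m → ℝ) (β : Fin m → ℕ) (t : Fin m → ℝ) :
    taylorTerm f x [] β t = f x := by
  rw [taylorTerm, List.toFinset_nil, prod_empty, one_mul, piecewise_empty]; rfl

lemma continuous_taylorTerm (hf : ContDiff ℝ (2 * l.length : ℕ) f) (hβ : ∀ k, β k ≤ 2)
    (x : Fin m → ℝ) : Continuous (taylorTerm f x l β) := by
  have hderiv : Continuous (pderivList l β f) :=
    (contDiff_pderivList_of_le_two (n := 0) (by simpa using hf) hβ).continuous
  have hpoint : Continuous fun t => l.toFinset.piecewise (taylorPoint β t) x := by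
    refine continuous_pi fun j => ?_
    by_cases hj : j ∈ l.toFinset
    · simpa only [piecewise_eq_of_mem _ _ _ hj, Function.comp_def] using
        (continuous_apply j).comp (continuous_taylorPoint β)
    · simpa only [piecewise_eq_of_notMem _ _ _ hj] using continuous_const
  exact (continuous_finsetProd _ fun j _ => by fun_prop).mul (hderiv.comp hpoint)

lemma taylorTerm_cons_update {k : Fin m} (hk : k ∉ l) (f : (Fin m → ℝ) → ℝ) (x t : Fin m → ℝ)
    (β : Fin m → ℕ) (i : ℕ) (s : ℝ) :
    taylorTerm f x (k :: l) (Function.update β k i) (Function.update t k s) =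
      (∏ j ∈ l.toFinset, taylorWeight (β j) (x j) (t j)) *
        (taylorWeight i (x k) s * ((pderiv1 k)^[i] (pderivList l β f))
          (Function.update (l.toFinset.piecewise (taylorPoint β t) x) k (taylorNode i s))) := by
  have hne : ∀ j ∈ l, j ≠ k := fun j hj hjk => hk (hjk ▸ hj)
  have hderiv : pderivList l (Function.update β k i) f = pderivList l β f :=
    pderivList_congr fun j hj => Function.update_of_ne (hne j hj) ..
  have hpoint : (insert k l.toFinset).piecewise
        (taylorPoint (Function.update β k i) (Function.update t k s)) x =
      Function.update (l.toFinset.piecewise (taylorPoint β t) x) k (taylorNode i s) := by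
    ext j
    rcases eq_or_ne j k with rfl | hj
    · simp [taylorPoint]
    · by_cases hjl : j ∈ l <;> simp [taylorPoint, hj, hjl, piecewise]
  have hweight : ∏ j ∈ l.toFinset,
        taylorWeight (Function.update β k i j) (x j) (Function.update t k s j) =
      ∏ j ∈ l.toFinset, taylorWeight (β j) (x j) (t j) :=
    prod_congr rfl fun j hj => by simp [hne j (List.mem_toFinset.1 hj)]
  rw [taylorTerm, List.toFinset_cons, prod_insert (by simpa using hk), hweight, pderivList_cons,
    hderiv, hpoint, Function.update_self, Function.update_self]
  ring

lemma taylorTerm_eq_sum_integral {k : Fin m} (hk : k ∉ l)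
    (hf : ContDiff ℝ (2 * (k :: l).length : ℕ) f) (hβ : ∀ j, β j ≤ 2) {x : Fin m → ℝ}
    (hx : x k ∈ Set.Icc (0 : ℝ) 1) (t : Fin m → ℝ) :
    taylorTerm f x l β t = ∑ i ∈ range 3, ∫ s, taylorTerm f x (k :: l) (Function.update β k i)
      (Function.update t k s) ∂unitIntervalMeasure := by
  have hderiv : ContDiff ℝ 2 (pderivList l β f) :=
    contDiff_pderivList_of_le_two (n := 2) (by convert hf using 2; simp; ring) hβ
  have hzk : l.toFinset.piecewise (taylorPoint β t) x k = x k :=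
    piecewise_eq_of_notMem _ _ _ (by simpa using hk)
  have htaylor := eq_sum_integral_taylorWeight_mul k hderiv
    (l.toFinset.piecewise (taylorPoint β t) x) (hzk.symm ▸ hx)
  simp only [taylorTerm_cons_update hk, integral_const_mul, ← mul_sum]
  rw [taylorTerm, htaylor, hzk]

lemma integral_taylorTerm_eq_sum {k : Fin m} (hk : k ∉ l)
    (hf : ContDiff ℝ (2 * (k :: l).length : ℕ) f) (hβ : ∀ j, β j ≤ 2) {x : Fin m → ℝ}
    (hx : x k ∈ Set.Icc (0 : ℝ) 1) :
    ∫ t, taylorTerm f x l β t ∂unitCubeMeasure (Fin m) =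
      ∑ i ∈ range 3,
        ∫ t, taylorTerm f x (k :: l) (Function.update β k i) t ∂unitCubeMeasure (Fin m) := by
  have hint : ∀ i ∈ range 3, Integrable (taylorTerm f x (k :: l) (Function.update β k i))
      (unitCubeMeasure (Fin m)) := fun i hi =>
    integrable_unitCubeMeasure <| continuous_taylorTerm hf
      ((Function.forall_update_iff β fun _ b => b ≤ 2).2
        ⟨Nat.lt_succ_iff.1 (mem_range.1 hi), fun j _ => hβ j⟩) x
  simp only [taylorTerm_eq_sum_integral hk hf hβ hx]
  simp only [unitCubeMeasure] at hint ⊢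
  rw [integral_finsetSum _ fun i hi => integrable_integral_update _ k (hint i hi)]
  exact sum_congr rfl fun i hi => integral_integral_update _ k (hint i hi)

theorem eq_sum_integral_taylorTerm (hl : l.Nodup) (hf : ContDiff ℝ (2 * l.length : ℕ) f)
    {x : Fin m → ℝ} (hx : ∀ k, x k ∈ Set.Icc (0 : ℝ) 1) :
    f x = ∑ β ∈ multiIndices l.toFinset, ∫ t, taylorTerm f x l β t ∂unitCubeMeasure (Fin m) := by
  induction l with
  | nil => simp [List.toFinset_nil, multiIndices_empty, taylorTerm_nil]
  | cons k l ih =>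
    obtain ⟨hk, hl⟩ := List.nodup_cons.1 hl
    rw [ih hl (hf.of_le (by norm_cast; simp)), List.toFinset_cons, multiIndices, multiIndices,
      piecewise_insert, sum_piFinset_update (b := 0) (by simp [hk])]
    exact sum_congr rfl fun β hβ =>
      integral_taylorTerm_eq_sum hk hf (le_two_of_mem_multiIndices hβ) (hx k)

end TaylorExpansion

section MarsMeasure

/-- Extension by zero of a vector indexed by `S` to a vector indexed by all coordinates. -/
def extendZero {ι M : Type*} [DecidableEq ι] [Zero M] (S : Finset ι) (u : S → M) : ι → M :=
  fun k => if h : k ∈ S then u ⟨k, h⟩ else 0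

lemma extendZero_restrict {ι M : Type*} [DecidableEq ι] [Zero M] (S : Finset ι) (v : ι → M) :
    extendZero S (S.restrict v) = S.piecewise v 0 :=
  rfl

lemma measurable_extendZero {ι M : Type*} [DecidableEq ι] [Zero M] [MeasurableSpace M]
    (S : Finset ι) : Measurable (extendZero S : (S → M) → ι → M) := by
  refine measurable_pi_lambda _ fun k => ?_
  by_cases hk : k ∈ S
  · simpa only [extendZero, hk, dite_true] using measurable_pi_apply _
  · simpa only [extendZero, hk, dite_false] using measurable_const

/-- The set of coordinates in which a multi-index is nonzero. The terms of the Taylor expansion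
whose multi-index has support `S` make up the measure `ν_S`. -/
def multiIndexSupport {ι : Type*} [Fintype ι] (β : ι → ℕ) : Finset ι := {k | β k ≠ 0}

lemma extendZero_restrict_taylorPoint {ι : Type*} [Fintype ι] [DecidableEq ι] (β : ι → ℕ)
    (t : ι → ℝ) :
    extendZero (multiIndexSupport β) ((multiIndexSupport β).restrict (taylorPoint β t)) =
      taylorPoint β t := by
  ext k
  by_cases hk : β k = 0 <;>
    simp [extendZero_restrict, piecewise, multiIndexSupport, taylorPoint, taylorNode, hk]

lemma extendZero_restrict_filter_eq_two {ι : Type*} [Fintype ι] [DecidableEq ι] (β : ι → ℕ)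
    (t : ι → ℝ) :
    extendZero {k | β k = 2} (Finset.restrict {k | β k = 2} t) = taylorPoint β t := by
  ext k
  simp [extendZero_restrict, piecewise, taylorPoint, taylorNode]

/-- The multi-index with support `S` and entries `2` at the nonzero coordinates of `u`, `1` at its
zero coordinates. It recovers `β` from a generic point of the form `taylorPoint β t`. -/
noncomputable def nodeIndex {ι : Type*} [DecidableEq ι] (S : Finset ι) (u : S → ℝ) : ι → ℕ :=
  extendZero S fun j => if u j = 0 then 1 else 2

lemma nodeIndex_restrict_taylorPoint {ι : Type*} [Fintype ι] [DecidableEq ι] {β : ι → ℕ}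
    (hβ : ∀ k, β k ≤ 2) {t : ι → ℝ} (ht : ∀ k, t k ≠ 0) :
    nodeIndex (multiIndexSupport β) ((multiIndexSupport β).restrict (taylorPoint β t)) = β := by
  ext k
  have hk := hβ k
  interval_cases h : β k <;>
    simp [nodeIndex, extendZero, multiIndexSupport, taylorPoint, taylorNode, h, ht k]

variable {d : ℕ} {f : (Fin d → ℝ) → ℝ} {β : Fin d → ℕ}

lemma continuous_pderivMulti (hf : ContDiff ℝ (2 * d : ℕ) f) (hβ : ∀ k, β k ≤ 2) :
    Continuous (pderivMulti β f) :=
  (contDiff_pderivList_of_le_two (l := List.finRange d) (n := 0) (by simpa using hf) hβ).continuous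

/-- A common density for all derivatives `f^(β)` with `multiIndexSupport β = S`: the zero
coordinates of `u` determine which of them is meant. -/
noncomputable def marsDensity (f : (Fin d → ℝ) → ℝ) (S : Finset (Fin d)) (u : S → ℝ) : ℝ :=
  pderivMulti (nodeIndex S u) f (extendZero S u)

lemma marsDensity_restrict_taylorPoint (f : (Fin d → ℝ) → ℝ) (hβ : ∀ k, β k ≤ 2)
    {t : Fin d → ℝ} (ht : ∀ k, t k ≠ 0) :
    marsDensity f (multiIndexSupport β) ((multiIndexSupport β).restrict (taylorPoint β t)) =
      pderivMulti β f (taylorPoint β t) := by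
  rw [marsDensity, nodeIndex_restrict_taylorPoint hβ ht, extendZero_restrict_taylorPoint]

lemma measurable_marsDensity (hf : ContDiff ℝ (2 * d : ℕ) f) (S : Finset (Fin d)) :
    Measurable (marsDensity f S) := by
  -- Indexing the derivatives by `Fin 3`-valued functions keeps their order in the range where
  -- they are continuous.
  have hderiv : Measurable fun p : (Fin d → Fin 3) × (Fin d → ℝ) =>
      pderivMulti (fun k => (p.1 k : ℕ)) f p.2 :=
    measurable_from_prod_countable_right fun β =>
      (continuous_pderivMulti hf fun k => Nat.lt_succ_iff.1 (β k).isLt).measurable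
  have hindex : Measurable fun u : S → ℝ =>
      extendZero S fun j => if u j = 0 then (1 : Fin 3) else 2 :=
    (measurable_extendZero S).comp <| measurable_pi_lambda _ fun j =>
      Measurable.ite (measurable_pi_apply j (measurableSet_singleton 0))
        measurable_const measurable_const
  convert hderiv.comp (hindex.prodMk (measurable_extendZero S)) using 1
  ext u
  have hval : nodeIndex S u =
      fun k => ((extendZero S fun j => if u j = 0 then (1 : Fin 3) else 2) k).val := by
    ext k
    by_cases hk : k ∈ S
    · by_cases huk : u ⟨k, hk⟩ = 0 <;> simp [nodeIndex, extendZero, hk, huk]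
    · simp [nodeIndex, extendZero, hk]
  simp only [marsDensity, hval, Function.comp_apply]

/-- The measure dominating `ν_S`: for each multi-index `β ∈ {0, 1, 2}^ι` with support `S`, Lebesgue
measure on the face of `[0, 1]^S` where the coordinates with `β k = 1` vanish. -/
noncomputable def faceMeasure {ι : Type*} [Fintype ι] [DecidableEq ι] (S : Finset ι) :
    Measure (S → ℝ) :=
  ∑ β ∈ multiIndices univ with multiIndexSupport β = S,
    (unitCubeMeasure ι).map fun t => S.restrict (taylorPoint β t)

lemma measurable_restrict_taylorPoint {ι : Type*} [Countable ι] (S : Finset ι) (β : ι → ℕ) :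
    Measurable fun t => S.restrict (taylorPoint β t) :=
  (Finset.measurable_restrict S).comp (continuous_taylorPoint β).measurable

lemma ae_marsDensity_restrict_taylorPoint (f : (Fin d → ℝ) → ℝ) (hβ : ∀ k, β k ≤ 2) :
    ∀ᵐ t ∂unitCubeMeasure (Fin d),
      marsDensity f (multiIndexSupport β) ((multiIndexSupport β).restrict (taylorPoint β t)) =
        pderivMulti β f (taylorPoint β t) := by
  filter_upwards [ae_mem_Ioo_unitCubeMeasure] with t ht
  exact marsDensity_restrict_taylorPoint f hβ fun k => (ht k).1.ne'

lemma integrable_marsDensity (hf : ContDiff ℝ (2 * d : ℕ) f) (S : Finset (Fin d)) :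
    Integrable (marsDensity f S) (faceMeasure S) := by
  refine (integrable_sum_map_iff (measurable_restrict_taylorPoint S)
    (measurable_marsDensity hf S)).2 fun β hβ => ?_
  obtain ⟨hmem, rfl⟩ := mem_filter.1 hβ
  have hβ2 := le_two_of_mem_multiIndices hmem
  exact (integrable_unitCubeMeasure
    ((continuous_pderivMulti hf hβ2).comp (continuous_taylorPoint β))).congr
    ((ae_marsDensity_restrict_taylorPoint f hβ2).mono fun t ht => ht.symm)

/-- The signed measure `ν_S` in the MARS representation of `f`. -/
noncomputable def marsMeasure (f : (Fin d → ℝ) → ℝ) (S : Finset (Fin d)) :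
    SignedMeasure (S → ℝ) :=
  (faceMeasure S).withDensityᵥ (marsDensity f S)

lemma prod_max_restrict_taylorPoint {ι : Type*} [Fintype ι] (β : ι → ℕ) (x t : ι → ℝ) :
    ∏ j : multiIndexSupport β,
        max (x j - (multiIndexSupport β).restrict (taylorPoint β t) j) 0 =
      ∏ j, taylorWeight (β j) (x j) (t j) := by
  calc _ = ∏ j ∈ multiIndexSupport β, max (x j - taylorPoint β t j) 0 :=
        prod_coe_sort _ fun j => max (x j - taylorPoint β t j) 0
    _ = _ := by simp only [multiIndexSupport, prod_filter, ite_not, taylorPoint, taylorWeight]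

lemma taylorTerm_finRange (f : (Fin d → ℝ) → ℝ) (x : Fin d → ℝ) (β : Fin d → ℕ)
    (t : Fin d → ℝ) :
    taylorTerm f x (List.finRange d) β t =
      (∏ j, taylorWeight (β j) (x j) (t j)) * pderivMulti β f (taylorPoint β t) := by
  rw [taylorTerm, List.toFinset_finRange, piecewise_univ]; rfl

lemma sIntegral_marsMeasure (hf : ContDiff ℝ (2 * d : ℕ) f) (S : Finset (Fin d))
    (x : Fin d → ℝ) :
    sIntegral (marsMeasure f S) (fun u => ∏ j : {j // j ∈ S}, max (x j.1 - u j) 0) =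
      ∑ β ∈ multiIndices univ with multiIndexSupport β = S,
        ∫ t, taylorTerm f x (List.finRange d) β t ∂unitCubeMeasure (Fin d) := by
  have hdens := measurable_marsDensity hf S
  have hhinge : Measurable fun u : S → ℝ => ∏ j : S, max (x j - u j) 0 := by fun_prop
  have hφ := measurable_restrict_taylorPoint S
  let G : (S → ℝ) → ℝ := fun u => marsDensity f S u * ∏ j : S, max (x j - u j) 0
  have hG : Measurable G := hdens.mul hhinge
  have hterm : ∀ β ∈ (multiIndices univ).filter (multiIndexSupport · = S),
      taylorTerm f x (List.finRange d) β =ᵐ[unitCubeMeasure (Fin d)]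
        fun t => G (S.restrict (taylorPoint β t)) := by
    intro β hβ
    obtain ⟨hmem, rfl⟩ := mem_filter.1 hβ
    filter_upwards [ae_marsDensity_restrict_taylorPoint f (le_two_of_mem_multiIndices hmem)]
      with t ht
    rw [taylorTerm_finRange, ← prod_max_restrict_taylorPoint, ← ht, mul_comm]
  have hint : ∀ β ∈ (multiIndices univ).filter (multiIndexSupport · = S),
      Integrable (fun t => G (S.restrict (taylorPoint β t))) (unitCubeMeasure (Fin d)) :=
    fun β hβ => (integrable_unitCubeMeasure (continuous_taylorTerm (by simpa using hf)
      (le_two_of_mem_multiIndices (mem_filter.1 hβ).1) x)).congr (hterm β hβ)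
  calc _ = ∫ u, G u ∂faceMeasure S :=
        sIntegral_withDensityᵥ hdens (integrable_marsDensity hf S) hhinge.aestronglyMeasurable
          ((integrable_sum_map_iff hφ hG).2 hint)
    _ = ∑ β ∈ multiIndices univ with multiIndexSupport β = S,
          ∫ t, G (S.restrict (taylorPoint β t)) ∂unitCubeMeasure (Fin d) :=
        integral_sum_map hφ hG hint
    _ = _ := sum_congr rfl fun β hβ => integral_congr_ae (hterm β hβ).symm

lemma totalVariation_marsMeasure_apply (hf : ContDiff ℝ (2 * d : ℕ) f) (S : Finset (Fin d))
    {A : Set (S → ℝ)} (hA : MeasurableSet A) :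
    (marsMeasure f S).totalVariation A =
      ∑ β ∈ multiIndices univ with multiIndexSupport β = S,
        ∫⁻ t in {t | S.restrict (taylorPoint β t) ∈ A}, ‖pderivMulti β f (taylorPoint β t)‖ₑ
          ∂unitCubeMeasure (Fin d) := by
  rw [marsMeasure, totalVariation_withDensityᵥ (integrable_marsDensity hf S),
    withDensity_apply _ hA, faceMeasure, setLIntegral_sum_map (measurable_restrict_taylorPoint S)
      (measurable_marsDensity hf S).enorm hA]
  refine sum_congr rfl fun β hβ => ?_
  obtain ⟨hmem, rfl⟩ := mem_filter.1 hβ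
  refine lintegral_congr_ae (ae_restrict_of_ae ?_)
  filter_upwards [ae_marsDensity_restrict_taylorPoint f (le_two_of_mem_multiIndices hmem)] with t ht
  rw [ht]

end MarsMeasure

section MarsRepresentation

variable {d : ℕ} {f : (Fin d → ℝ) → ℝ} {β : Fin d → ℕ}

lemma measurableSet_halfOpenCube_s16 (ι : Type*) [Countable ι] :
    MeasurableSet {u : ι → ℝ | ∀ j, 0 ≤ u j ∧ u j < 1} := by
  convert MeasurableSet.univ_pi fun _ : ι => measurableSet_Ico (a := (0 : ℝ)) (b := 1)
  ext u
  simp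

lemma taylorPoint_mem_Ico {ι : Type*} (β : ι → ℕ) {t : ι → ℝ} (ht : ∀ k, t k ∈ Set.Ioo (0 : ℝ) 1)
    (k : ι) : taylorPoint β t k ∈ Set.Ico (0 : ℝ) 1 := by
  unfold taylorPoint taylorNode
  split_ifs
  · exact Set.Ioo_subset_Ico_self (ht k)
  · simp

lemma totalVariation_marsMeasure_compl_halfOpenCube (hf : ContDiff ℝ (2 * d : ℕ) f)
    (S : Finset (Fin d)) :
    (marsMeasure f S).totalVariation {u : {j // j ∈ S} → ℝ | ∀ j, 0 ≤ u j ∧ u j < 1}ᶜ = 0 := by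
  rw [totalVariation_marsMeasure_apply hf S (measurableSet_halfOpenCube_s16 _).compl]
  refine sum_eq_zero fun β _ => setLIntegral_measure_zero _ _ ?_
  exact measure_mono_null (fun t ht htmem => ht fun j => taylorPoint_mem_Ico β htmem j)
    (ae_iff.1 ae_mem_Ioo_unitCubeMeasure)

/-- The MARS representation of a function `f` of class `C^(2d)`. -/
noncomputable def marsRep (hf : ContDiff ℝ (2 * d : ℕ) f) : MarsRep d where
  a0 := f 0
  ν := marsMeasure f
  conc := totalVariation_marsMeasure_compl_halfOpenCube hf

lemma multiIndexSupport_eq_empty {ι : Type*} [Fintype ι] {β : ι → ℕ} :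
    multiIndexSupport β = ∅ ↔ β = 0 := by
  simp [multiIndexSupport, filter_eq_empty_iff, funext_iff]

theorem eq_marsFun_marsRep (hf : ContDiff ℝ (2 * d : ℕ) f) {x : Fin d → ℝ}
    (hx : ∀ k, x k ∈ Set.Icc (0 : ℝ) 1) : f x = marsFun (marsRep hf) x := by
  set F : Finset (Fin d) → ℝ := fun S => ∑ β ∈ multiIndices univ with multiIndexSupport β = S,
    ∫ t, taylorTerm f x (List.finRange d) β t ∂unitCubeMeasure (Fin d) with hF
  have hempty : F ∅ = f 0 := by
    have hfilter : (multiIndices univ : Finset (Fin d → ℕ)).filter (multiIndexSupport · = ∅) =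
        {0} := by
      ext β
      simp +contextual [multiIndexSupport_eq_empty, multiIndices_univ]
    have hpoint (t : Fin d → ℝ) : taylorPoint 0 t = 0 := by
      ext k; simp [taylorPoint, taylorNode]
    have hderiv : pderivMulti 0 f = f := pderivList_zero _
    simp [hF, hfilter, taylorTerm_finRange, taylorWeight, hpoint, hderiv]
  calc f x = ∑ β ∈ multiIndices univ,
        ∫ t, taylorTerm f x (List.finRange d) β t ∂unitCubeMeasure (Fin d) := by
        simpa using eq_sum_integral_taylorTerm (List.nodup_finRange d) (by simpa using hf) hx
    _ = ∑ S, F S := (sum_fiberwise _ _ _).symm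
    _ = f 0 + ∑ S, if S.Nonempty then F S else 0 := by
        rw [← sum_filter, ← add_sum_erase univ F (mem_univ ∅), hempty]
        simp only [nonempty_iff_ne_empty, filter_ne']
    _ = marsFun (marsRep hf) x := by
        simp only [marsFun, marsRep, sIntegral_marsMeasure hf, hF]

lemma univ_sup_eq_two_iff {ι : Type*} [Fintype ι] {β : ι → ℕ} (hβ : ∀ k, β k ≤ 2) :
    univ.sup β = 2 ↔ ∃ k, β k = 2 := by
  calc univ.sup β = 2 ↔ 1 < univ.sup β := by
        have := Finset.sup_le fun k (_ : k ∈ univ) => hβ k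
        omega
    _ ↔ ∃ k, 1 < β k := by simp only [Finset.lt_sup_iff, mem_univ, true_and]
    _ ↔ ∃ k, β k = 2 := exists_congr fun k => by have := hβ k; omega

lemma restrict_taylorPoint_mem_halfOpenCube_diff_zero_iff {ι : Type*} [Fintype ι] {β : ι → ℕ}
    (hβ : ∀ k, β k ≤ 2) {t : ι → ℝ} (ht : ∀ k, t k ∈ Set.Ioo (0 : ℝ) 1) :
    (multiIndexSupport β).restrict (taylorPoint β t) ∈
        {u : {j // j ∈ multiIndexSupport β} → ℝ | ∀ j, 0 ≤ u j ∧ u j < 1} \ {fun _ => 0} ↔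
      univ.sup β = 2 := by
  rw [univ_sup_eq_two_iff hβ]
  refine ⟨fun hmem => ?_, ?_⟩
  · obtain ⟨j, hj⟩ := Function.ne_iff.1 hmem.2
    refine ⟨j, by_contra fun hne => hj ?_⟩
    simp [taylorPoint, taylorNode, hne]
  · rintro ⟨k, hk⟩
    refine ⟨fun j => taylorPoint_mem_Ico β ht j, fun hzero => (ht k).1.ne' ?_⟩
    simpa [taylorPoint, taylorNode, hk] using
      congrFun hzero ⟨k, by simp [multiIndexSupport, hk]⟩

lemma totalVariation_marsMeasure_halfOpenCube_diff_zero (hf : ContDiff ℝ (2 * d : ℕ) f)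
    (S : Finset (Fin d)) :
    (marsMeasure f S).totalVariation
        ({u : {j // j ∈ S} → ℝ | ∀ j, 0 ≤ u j ∧ u j < 1} \ {fun _ => 0}) =
      ∑ β ∈ multiIndices univ with multiIndexSupport β = S, if univ.sup β = 2 then
        ∫⁻ t, ‖pderivMulti β f (taylorPoint β t)‖ₑ ∂unitCubeMeasure (Fin d) else 0 := by
  rw [totalVariation_marsMeasure_apply hf S
    ((measurableSet_halfOpenCube_s16 _).diff (measurableSet_singleton _))]
  refine sum_congr rfl fun β hβ => ?_
  obtain ⟨hmem, rfl⟩ := mem_filter.1 hβ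
  have hset : {t | (multiIndexSupport β).restrict (taylorPoint β t) ∈
        {u : {j // j ∈ multiIndexSupport β} → ℝ | ∀ j, 0 ≤ u j ∧ u j < 1} \ {fun _ => 0}}
      =ᵐ[unitCubeMeasure (Fin d)] {_t | univ.sup β = 2} := by
    filter_upwards [ae_mem_Ioo_unitCubeMeasure] with t ht
    exact propext (restrict_taylorPoint_mem_halfOpenCube_diff_zero_iff
      (le_two_of_mem_multiIndices hmem) ht)
  rw [setLIntegral_congr hset]
  split_ifs with hsup <;> simp [hsup]

theorem marsVar_marsRep (hf : ContDiff ℝ (2 * d : ℕ) f) :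
    marsVar (marsRep hf) = ∑ β ∈ multiIndices univ with univ.sup β = 2,
      ∫⁻ t, ‖pderivMulti β f (taylorPoint β t)‖ₑ ∂unitCubeMeasure (Fin d) := by
  -- For `S = ∅` the half-open cube is the single point `0`, so that term vanishes anyway.
  have hempty (S : Finset (Fin d)) (hS : ¬S.Nonempty) : (marsMeasure f S).totalVariation
      ({u : {j // j ∈ S} → ℝ | ∀ j, 0 ≤ u j ∧ u j < 1} \ {fun _ => 0}) = 0 := by
    have : IsEmpty S := by simpa using hS
    have hsubset : {u : {j // j ∈ S} → ℝ | ∀ j, 0 ≤ u j ∧ u j < 1} ⊆ {fun _ => 0} :=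
      fun u _ => Subsingleton.elim _ _
    rw [Set.sdiff_eq_empty.2 hsubset, measure_empty]
  calc marsVar (marsRep hf) = ∑ S, (marsMeasure f S).totalVariation
        ({u : {j // j ∈ S} → ℝ | ∀ j, 0 ≤ u j ∧ u j < 1} \ {fun _ => 0}) :=
        sum_congr rfl fun S _ => ite_eq_left_iff.2 fun hS => (hempty S hS).symm
    _ = _ := by
        simp only [totalVariation_marsMeasure_halfOpenCube_diff_zero hf]
        rw [sum_fiberwise, sum_filter]

-- The `Fintype` instance on the index type is arbitrary because `volume` may have been elaborated
-- with `Subtype.fintype` instead of `Finset.Subtype.fintype`.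
lemma setIntegral_Icc_extendZero {ι : Type*} [Fintype ι] [DecidableEq ι] (S : Finset ι)
    {inst : Fintype {k // k ∈ S}} {G : (ι → ℝ) → ℝ} (hG : Measurable G) :
    ∫ u in Set.univ.pi fun _ : {k // k ∈ S} => Set.Icc (0 : ℝ) 1, G (extendZero S u) =
      ∫ t, G (extendZero S (S.restrict t)) ∂unitCubeMeasure ι := by
  obtain rfl : inst = Finset.Subtype.fintype S := Subsingleton.elim _ _
  rw [← unitCubeMeasure_eq_restrict, ← map_restrict_unitCubeMeasure, integral_map]
  · fun_prop
  · exact (hG.comp (measurable_extendZero S)).aestronglyMeasurable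

lemma ofReal_setIntegral_abs_pderivMulti (hf : ContDiff ℝ (2 * d : ℕ) f) (hβ : ∀ k, β k ≤ 2)
    {_ : Fintype {k // k ∈ univ.filter fun k : Fin d => β k = 2}} :
    ENNReal.ofReal (∫ t in Set.univ.pi fun _ : {k // k ∈ univ.filter fun k : Fin d => β k = 2} =>
        Set.Icc (0 : ℝ) 1, |pderivMulti β f (extendZero {k | β k = 2} t)|) =
      ∫⁻ t, ‖pderivMulti β f (taylorPoint β t)‖ₑ ∂unitCubeMeasure (Fin d) := by
  have hderiv := continuous_pderivMulti hf hβ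
  rw [setIntegral_Icc_extendZero _ hderiv.abs.measurable]
  simp only [extendZero_restrict_filter_eq_two, ← Real.norm_eq_abs]
  exact ofReal_integral_norm_eq_lintegral_enorm
    (integrable_unitCubeMeasure (hderiv.comp (continuous_taylorPoint β)))

end MarsRepresentation

theorem statement16_general (d : ℕ) (f : (Fin d → ℝ) → ℝ) (hf : ContDiff ℝ (2 * d : ℕ) f) :
    ∃ R : MarsRep d,
      (∀ x : Fin d → ℝ, (∀ k, x k ∈ Set.Icc (0 : ℝ) 1) → f x = marsFun R x) ∧
      marsVar R = ENNReal.ofReal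
        (∑ β ∈ (Fintype.piFinset fun _ : Fin d => Finset.range 3).filter
            (fun β => Finset.univ.sup β = 2),
          ∫ t in Set.univ.pi
              fun _ : {k // k ∈ Finset.univ.filter fun k : Fin d => β k = 2} =>
                Set.Icc (0 : ℝ) 1,
            |pderivMulti β f fun k =>
              if h : k ∈ Finset.univ.filter (fun k : Fin d => β k = 2) then t ⟨k, h⟩
              else 0|) := by
  refine ⟨marsRep hf, fun x hx => eq_marsFun_marsRep hf hx, ?_⟩
  rw [marsVar_marsRep, ← multiIndices_univ,
    ENNReal.ofReal_sum_of_nonneg fun β _ => integral_nonneg fun t => abs_nonneg _]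
  exact sum_congr rfl fun β hβ => (ofReal_setIntegral_abs_pderivMulti hf
    (le_two_of_mem_multiIndices (mem_filter.1 hβ).1)).symm

/-- Every `C^∞` function on `ℝ^d`, restricted to `[0,1]^d`, admits a
MARS representation whose variation equals
`Σ_{β ∈ {0,1,2}^d, max β = 2} ∫_{T̄^(β)} |f^(β)|` (integrating over the coordinates with
`β_k = 2`, the others set to `0`). -/
theorem statement16 (d : ℕ) (hd : 1 ≤ d) (f : (Fin d → ℝ) → ℝ)
    (hf : ContDiff ℝ (⊤ : ℕ∞) f) :
    ∃ R : MarsRep d,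
      (∀ x : Fin d → ℝ, (∀ k, x k ∈ Set.Icc (0 : ℝ) 1) → f x = marsFun R x) ∧
      marsVar R = ENNReal.ofReal
        (∑ β ∈ (Fintype.piFinset fun _ : Fin d => Finset.range 3).filter
            (fun β => Finset.univ.sup β = 2),
          ∫ t in Set.univ.pi
              fun _ : {k // k ∈ Finset.univ.filter fun k : Fin d => β k = 2} =>
                Set.Icc (0 : ℝ) 1,
            |pderivMulti β f fun k =>
              if h : k ∈ Finset.univ.filter (fun k : Fin d => β k = 2) then t ⟨k, h⟩
              else 0|) :=
  statement16_general d f (contDiff_infty.1 hf (2 * d))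
end
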